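/- arXiv:2509.24598 — 11 statements merged into one kernel-verified Lean document; each statement's English description precedes it below -/
import Mathlib

section
/- Let L be a real N×N matrix, A an n×n real matrix, B an n×m real matrix, K an m×n real matrix, and c > 0 a real number. Suppose L·1 = 0 (the all-ones vector is in the kernel of L) and 0 is a root of multiplicity exactly one of the characteristic polynomial of L over ℂ. Consider the closed-loop system x(k+1) = (I_N ⊗ A − c·L ⊗ (BK)) x(k), where x(k) ∈ ℝ^{Nn} is partitioned into N blocks x_1(k),…,x_N(k) ∈ ℝ^n. Then ‖x_i(k) − x_j(k)‖ → 0 as k → ∞ for all i, j and all initial conditions x(0) if and only if for every nonzero eigenvalue λ ∈ ℂ of L, the complex matrix A − cλ·BK has spectral radius strictly less than 1 (i.e., every eigenvalue of A − cλ·BK lies strictly inside the unit circle). -/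
open Matrix Kronecker Filter Polynomial

lemma cis_pow_tendsto {V : Type*} [NormedAddCommGroup V] [NormedSpace ℂ V]
    [FiniteDimensional ℂ V] (T : Module.End ℂ V)
    (h : ∀ z, T.HasEigenvalue z → ‖z‖ < 1) (v : V) :
    Tendsto (fun k => (T ^ k) v) atTop (nhds 0) := by
  rcases subsingleton_or_nontrivial V with hV | hV
  · have : (fun k => (T ^ k) v) = fun _ => 0 := by
      funext k; exact Subsingleton.elim _ _
    rw [this]; exact tendsto_const_nhds
  have : CompleteSpace V := FiniteDimensional.complete ℂ V
  set a := Module.End.toContinuousLinearMap V T with ha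
  have hs : spectralRadius ℂ a < (1 : NNReal) := by
    apply spectrum.spectralRadius_lt_of_forall_lt
    intro z hz
    rw [ha, AlgEquiv.spectrum_eq, ← Module.End.hasEigenvalue_iff_mem_spectrum] at hz
    exact_mod_cast h z hz
  obtain ⟨q, hq1, hq2⟩ := ENNReal.lt_iff_exists_nnreal_btwn.1 hs
  have hq2' : q < 1 := by exact_mod_cast hq2
  have hev := (spectrum.pow_nnnorm_pow_one_div_tendsto_nhds_spectralRadius a).eventually
    (gt_mem_nhds hq1)
  have hb : ∀ᶠ k : ℕ in atTop, ‖(T ^ k) v‖ ≤ (q : ℝ) ^ k * ‖v‖ := by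
    filter_upwards [hev, eventually_gt_atTop 0] with k hk hk0
    have h1 : (‖a ^ k‖₊ : ENNReal) ≤ (q : ENNReal) ^ k := by
      have := ENNReal.rpow_le_rpow hk.le (z := (k : ℝ)) (by positivity)
      rw [← ENNReal.rpow_mul, one_div, inv_mul_cancel₀ (by positivity), ENNReal.rpow_one,
        ENNReal.rpow_natCast] at this
      exact this
    have h2 : ‖a ^ k‖₊ ≤ q ^ k := by exact_mod_cast h1
    have h3 : ‖a ^ k‖ ≤ (q : ℝ) ^ k := by exact_mod_cast h2
    have h4 : (T ^ k) v = (a ^ k) v := by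
      rw [ha, ← map_pow]; rfl
    rw [h4]
    exact ((a ^ k).le_opNorm v).trans (by gcongr)
  refine squeeze_zero_norm' hb ?_
  have := (tendsto_pow_atTop_nhds_zero_of_lt_one (r := (q : ℝ)) q.2 (by exact_mod_cast hq2')).mul_const ‖v‖
  simpa using this

lemma cis_pow_tendsto_range {V : Type*} [NormedAddCommGroup V] [NormedSpace ℂ V]
    [FiniteDimensional ℂ V] (M P : Module.End ℂ V) (hc : Commute M P)
    (hP : ∀ y, P (P y) = 0 → P y = 0)
    (h : ∀ (z l : ℂ) (x : V), x ≠ 0 → l ≠ 0 → M x = z • x → P x = l • x → ‖z‖ < 1) (v : V) :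
    Tendsto (fun k => P ((M ^ k) v)) atTop (nhds 0) := by
  have hcx : ∀ x, M (P x) = P (M x) := fun x => LinearMap.congr_fun hc.eq x
  have hM : ∀ x ∈ LinearMap.range P, M x ∈ LinearMap.range P := by
    rintro _ ⟨x, rfl⟩; exact ⟨M x, (hcx x).symm⟩
  have key := cis_pow_tendsto (M.restrict hM) (by
    intro z hz
    obtain ⟨⟨x, hxr⟩, hx⟩ := hz.exists_hasEigenvector
    have hxe : M x = z • x := congrArg Subtype.val hx.apply_eq_smul
    have hx0 : x ≠ 0 := fun h0 => hx.2 (Subtype.ext h0)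
    let E : Submodule ℂ V := LinearMap.range P ⊓ LinearMap.ker (M - z • (1 : Module.End ℂ V))
    have hE : ∀ y ∈ E, P y ∈ E := by
      rintro y ⟨_, hy⟩
      refine ⟨⟨y, rfl⟩, ?_⟩
      rw [SetLike.mem_coe, LinearMap.mem_ker, LinearMap.sub_apply, sub_eq_zero] at hy ⊢
      have hy' : M y = z • y := hy
      change M (P y) = z • P y
      rw [hcx, hy', map_smul]
    have : Nontrivial E := ⟨⟨⟨x, hxr, by
      rw [SetLike.mem_coe, LinearMap.mem_ker, LinearMap.sub_apply, sub_eq_zero]; exact hxe⟩, 0,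
      fun h0 => hx0 (congrArg Subtype.val h0)⟩⟩
    obtain ⟨l, hl⟩ := Module.End.exists_eigenvalue (P.restrict hE)
    obtain ⟨⟨y, hyE⟩, hy⟩ := hl.exists_hasEigenvector
    have hye : P y = l • y := congrArg Subtype.val hy.apply_eq_smul
    have hy0 : y ≠ 0 := fun h0 => hy.2 (Subtype.ext h0)
    have hyM : M y = z • y := by
      have := hyE.2
      rw [SetLike.mem_coe, LinearMap.mem_ker, LinearMap.sub_apply, sub_eq_zero] at this
      exact this
    refine h z l y hy0 ?_ hyM hye
    rintro rfl
    obtain ⟨u, rfl⟩ := hyE.1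
    exact hy0 (hP u (by rw [hye, zero_smul]))) ⟨P v, v, rfl⟩
  have h2 := (continuous_subtype_val.tendsto _).comp key
  refine h2.congr ?_
  intro k
  have h3 : ∀ k (w : LinearMap.range P), (((M.restrict hM) ^ k) w : V) = (M ^ k) w := by
    intro k
    induction k with
    | zero => intro w; rfl
    | succ k ih => intro w; rw [pow_succ, pow_succ]; exact ih _
  rw [Function.comp_apply, h3]
  exact LinearMap.congr_fun (hc.pow_left k).eq v

lemma cis_root {ι : Type*} [Fintype ι] [DecidableEq ι] (A : Matrix ι ι ℂ) (z : ℂ) :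
    A.charpoly.IsRoot z ↔ ∃ v, v ≠ 0 ∧ A *ᵥ v = z • v := by
  rw [← Matrix.charpoly_toLin', ← Module.End.hasEigenvalue_iff_isRoot_charpoly]
  constructor
  · intro h
    obtain ⟨v, hv⟩ := h.exists_hasEigenvector
    exact ⟨v, hv.2, by simpa using hv.apply_eq_smul⟩
  · rintro ⟨v, h0, hv⟩
    exact Module.End.hasEigenvalue_of_hasEigenvector (x := v)
      ⟨Module.End.mem_eigenspace_iff.2 (by simpa using hv), h0⟩

lemma cis_gen {N : ℕ} (L : Matrix (Fin N) (Fin N) ℂ) (h1 : L *ᵥ (fun _ => 1) = 0)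
    (hm : L.charpoly.rootMultiplicity 0 = 1) (v : Fin N → ℂ) (hv : L *ᵥ (L *ᵥ v) = 0) :
    ∃ t : ℂ, v = fun _ => t := by
  rcases N with _ | N
  · exact ⟨0, Subsingleton.elim _ _⟩
  have hf := LinearMap.finrank_maxGenEigenspace_eq L.toLin' 0
  rw [Matrix.charpoly_toLin', hm] at hf
  have hmem : ∀ w : Fin (N+1) → ℂ, L *ᵥ (L *ᵥ w) = 0 → w ∈ Module.End.maxGenEigenspace L.toLin' 0 := by
    intro w hw
    rw [Module.End.mem_maxGenEigenspace]
    refine ⟨2, ?_⟩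
    rw [zero_smul, sub_zero, pow_two]
    simpa using hw
  obtain ⟨t, ht⟩ := (finrank_eq_one_iff_of_nonzero' (⟨fun _ => 1, hmem _ (by rw [h1]; simp)⟩ :
    Module.End.maxGenEigenspace L.toLin' 0) (by
      intro h; have := congrFun (congrArg Subtype.val h) 0; simp at this)).1 hf ⟨v, hmem v hv⟩
  refine ⟨t, ?_⟩
  have h5 : t • (fun _ => (1 : ℂ)) = v := congrArg Subtype.val ht
  rw [← h5]; ext i; simp

lemma cis_diff {N : ℕ} (L : Matrix (Fin N) (Fin N) ℂ)
    (h : ∀ v, L *ᵥ v = 0 → ∃ t : ℂ, v = fun _ => t) (i j : Fin N) :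
    ∃ f : Module.Dual ℂ (Fin N → ℂ), ∀ v, f (L *ᵥ v) = v i - v j := by
  have : ((LinearMap.proj i : (Fin N → ℂ) →ₗ[ℂ] ℂ) - LinearMap.proj j : Module.Dual ℂ (Fin N → ℂ)) ∈
      LinearMap.range L.toLin'.dualMap := by
    rw [LinearMap.range_dualMap_eq_dualAnnihilator_ker, Submodule.mem_dualAnnihilator]
    intro w hw
    obtain ⟨t, rfl⟩ := h w (by simpa using hw)
    simp
  obtain ⟨f, hf⟩ := this
  refine ⟨f, fun v => ?_⟩
  have := LinearMap.congr_fun hf v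
  simpa using this

lemma cis_kron {N n : ℕ} (P : Matrix (Fin N) (Fin N) ℂ) (Q : Matrix (Fin n) (Fin n) ℂ)
    (v : Fin N → ℂ) (w : Fin n → ℂ) :
    (P ⊗ₖ Q) *ᵥ (fun p => v p.1 * w p.2) = fun p => (P *ᵥ v) p.1 * (Q *ᵥ w) p.2 := by
  ext ⟨i, p⟩
  simp only [mulVec, dotProduct, kroneckerMap_apply, Fintype.sum_prod_type, Finset.sum_mul_sum]
  refine Finset.sum_congr rfl fun _ _ => Finset.sum_congr rfl fun _ _ => by ring

lemma cis_kron_one_left {N n : ℕ} (Q : Matrix (Fin n) (Fin n) ℂ)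
    (X : Fin N × Fin n → ℂ) (i : Fin N) :
    (fun p => (((1 : Matrix (Fin N) (Fin N) ℂ) ⊗ₖ Q) *ᵥ X) (i, p)) = Q *ᵥ (fun p => X (i, p)) := by
  ext p
  simp [mulVec, dotProduct, kroneckerMap_apply, Fintype.sum_prod_type, Matrix.one_apply]

lemma cis_kron_one_right {N n : ℕ} (P : Matrix (Fin N) (Fin N) ℂ)
    (X : Fin N × Fin n → ℂ) (p : Fin n) :
    (fun i => ((P ⊗ₖ (1 : Matrix (Fin n) (Fin n) ℂ)) *ᵥ X) (i, p)) = P *ᵥ (fun i => X (i, p)) := by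
  ext i
  simp [mulVec, dotProduct, kroneckerMap_apply, Fintype.sum_prod_type, Matrix.one_apply]

lemma cis_forward {N n : ℕ} (L : Matrix (Fin N) (Fin N) ℂ) (A C : Matrix (Fin n) (Fin n) ℂ) (c : ℂ)
    (h1 : L *ᵥ (fun _ => 1) = 0)
    (hcons : ∀ x : ℕ → (Fin N × Fin n → ℂ),
      (∀ k, x (k + 1) = ((1 : Matrix (Fin N) (Fin N) ℂ) ⊗ₖ A - c • (L ⊗ₖ C)) *ᵥ x k) →
      ∀ i j p, Tendsto (fun k => x k (i, p) - x k (j, p)) atTop (nhds 0))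
    (l z : ℂ) (hl : L.charpoly.IsRoot l) (hl0 : l ≠ 0)
    (hz : (A - (c * l) • C).charpoly.IsRoot z) : ‖z‖ < 1 := by
  obtain ⟨v, hv0, hv⟩ := (cis_root _ _).1 hl
  obtain ⟨w, hw0, hw⟩ := (cis_root _ _).1 hz
  have hij : ∃ i j, v i - v j ≠ 0 := by
    by_contra! hcon
    apply hv0
    ext i
    have : v = v i • (fun _ => (1 : ℂ)) := by
      ext j; simpa using sub_eq_zero.1 (hcon j i)
    have h2 : L *ᵥ v = 0 := by rw [this, mulVec_smul, h1, smul_zero]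
    rw [hv] at h2
    have := congrFun h2 i
    simpa [hl0] using this
  obtain ⟨i, j, hij⟩ := hij
  obtain ⟨p, hp⟩ := Function.ne_iff.1 hw0
  have := hcons (fun k => z ^ k • fun q => v q.1 * w q.2) (by
    intro k
    rw [mulVec_smul, sub_mulVec, smul_mulVec, cis_kron, cis_kron, one_mulVec, hv, pow_succ, mul_smul]
    congr 1
    ext ⟨i, p⟩
    have := congrFun hw p
    simp only [sub_mulVec, smul_mulVec, Pi.sub_apply, Pi.smul_apply, smul_eq_mul] at this ⊢
    linear_combination (- v i) * this) i j p
  have h2 := this.mul_const (((v i - v j) * w p)⁻¹)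
  have hne : (v i - v j) * w p ≠ 0 := mul_ne_zero hij hp
  have h3 : Tendsto (fun k => z ^ k) atTop (nhds 0) := by
    rw [zero_mul] at h2
    refine h2.congr fun k => ?_
    rw [← div_eq_mul_inv, div_eq_iff hne]
    simp only [Pi.smul_apply, smul_eq_mul]; ring
  exact tendsto_pow_atTop_nhds_zero_iff_norm_lt_one.1 h3

lemma cis_backward {N n : ℕ} (L : Matrix (Fin N) (Fin N) ℂ) (A C : Matrix (Fin n) (Fin n) ℂ) (c : ℂ)
    (h1 : L *ᵥ (fun _ => 1) = 0) (hm : L.charpoly.rootMultiplicity 0 = 1)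
    (hst : ∀ l : ℂ, L.charpoly.IsRoot l → l ≠ 0 → ∀ z,
      (A - (c * l) • C).charpoly.IsRoot z → ‖z‖ < 1)
    (x : ℕ → (Fin N × Fin n → ℂ))
    (hx : ∀ k, x (k + 1) = ((1 : Matrix (Fin N) (Fin N) ℂ) ⊗ₖ A - c • (L ⊗ₖ C)) *ᵥ x k)
    (i j : Fin N) (p : Fin n) : Tendsto (fun k => x k (i, p) - x k (j, p)) atTop (nhds 0) := by
  set M := ((1 : Matrix (Fin N) (Fin N) ℂ) ⊗ₖ A - c • (L ⊗ₖ C)) with hM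
  set P := L ⊗ₖ (1 : Matrix (Fin n) (Fin n) ℂ) with hP
  have hcomm : M * P = P * M := by
    rw [hM, hP, sub_mul, mul_sub, smul_mul_assoc, mul_smul_comm, ← mul_kronecker_mul,
      ← mul_kronecker_mul, ← mul_kronecker_mul, ← mul_kronecker_mul]
    simp
  have hxk : ∀ k, x k = (M.toLin' ^ k) (x 0) := by
    intro k
    induction k with
    | zero => rfl
    | succ k ih => rw [hx, pow_succ', Module.End.mul_apply, ← ih, toLin'_apply]
  have key := cis_pow_tendsto_range M.toLin' P.toLin'
    (by change M.toLin'.comp P.toLin' = P.toLin'.comp M.toLin'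
        rw [← toLin'_mul, ← toLin'_mul, hcomm]) ?_ ?_ (x 0)
  · obtain ⟨f, hf⟩ := cis_diff L (fun v hv => cis_gen L h1 hm v (by rw [hv, mulVec_zero])) i j
    have hfc : Continuous f := f.continuous_of_finiteDimensional
    have h4 : Tendsto (fun k => f (fun i => (P *ᵥ (x k)) (i, p))) atTop (nhds 0) := by
      have h5 : Continuous (fun y : Fin N × Fin n → ℂ => f (fun i => y (i, p))) := by fun_prop
      have h6 := (h5.tendsto 0).comp key
      have h7 : f (fun i => (0 : Fin N × Fin n → ℂ) (i, p)) = 0 := map_zero f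
      rw [h7] at h6
      refine h6.congr fun k => ?_
      rw [Function.comp_apply, ← hxk, toLin'_apply]
    refine h4.congr fun k => ?_
    rw [hP, cis_kron_one_right, hf]
  · intro y hy
    simp only [toLin'_apply] at hy ⊢
    ext ⟨i, p⟩
    have e1 := cis_kron_one_right L y p
    have e2 := cis_kron_one_right L (P *ᵥ y) p
    rw [← hP] at e1 e2
    rw [hy, e1] at e2
    obtain ⟨t, ht⟩ := cis_gen L h1 hm _ e2.symm
    have e3 : L *ᵥ (fun i => y (i, p)) = 0 := by
      have : (fun i => y (i, p)) = t • (fun _ => (1 : ℂ)) := by rw [ht]; ext; simp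
      rw [this, mulVec_smul, h1, smul_zero]
    rw [e3] at e1
    exact congrFun e1 i
  · intro z l X hX0 hl0 hMX hPX
    rw [toLin'_apply] at hMX hPX
    obtain ⟨⟨i, p⟩, hip⟩ := Function.ne_iff.1 hX0
    refine hst l ((cis_root _ _).2 ⟨fun i => X (i, p), ?_, ?_⟩) hl0 z
      ((cis_root _ _).2 ⟨fun p => X (i, p), ?_, ?_⟩)
    · exact fun h => hip (congrFun h i)
    · rw [← cis_kron_one_right, ← hP, hPX]; rfl
    · exact fun h => hip (congrFun h p)
    · have e : L ⊗ₖ C = ((1 : Matrix (Fin N) (Fin N) ℂ) ⊗ₖ C) * P := by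
        rw [hP, ← mul_kronecker_mul]; simp
      rw [hM, sub_mulVec, smul_mulVec, e, ← mulVec_mulVec, hPX, mulVec_smul] at hMX
      rw [sub_mulVec, smul_mulVec, ← cis_kron_one_left, ← cis_kron_one_left]
      ext q
      have := congrFun hMX (i, q)
      simp only [Pi.sub_apply, Pi.smul_apply, smul_eq_mul] at this ⊢
      linear_combination this

lemma cis_map {N n m : ℕ} (L : Matrix (Fin N) (Fin N) ℝ)
    (A : Matrix (Fin n) (Fin n) ℝ) (B : Matrix (Fin n) (Fin m) ℝ)
    (K : Matrix (Fin m) (Fin n) ℝ) (c : ℝ) :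
    ((1 : Matrix (Fin N) (Fin N) ℝ) ⊗ₖ A - c • (L ⊗ₖ (B * K))).map (Complex.ofReal ·) =
    (1 : Matrix (Fin N) (Fin N) ℂ) ⊗ₖ (A.map (Complex.ofReal ·)) -
      (c : ℂ) • ((L.map (Complex.ofReal ·)) ⊗ₖ
        (B.map (Complex.ofReal ·) * K.map (Complex.ofReal ·))) := by
  ext ⟨i, p⟩ ⟨j, q⟩
  by_cases h : i = j <;> simp [kroneckerMap_apply, Matrix.mul_apply, Matrix.one_apply, h]

/-- Lemma 1 (dynamic consensus criterion): the closed-loop multi-agent system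
`x(k+1) = (I_N ⊗ A − c·L ⊗ (BK)) x(k)` reaches state consensus for every initial
condition iff for every nonzero eigenvalue `λ` of `L`, the matrix `A − cλ·BK`
is Schur stable. -/
theorem consensus_iff_schur (N n m : ℕ)
    (L : Matrix (Fin N) (Fin N) ℝ)
    (A : Matrix (Fin n) (Fin n) ℝ) (B : Matrix (Fin n) (Fin m) ℝ)
    (K : Matrix (Fin m) (Fin n) ℝ) (c : ℝ) (hc : 0 < c)
    (hL1 : L.mulVec (fun _ => (1 : ℝ)) = 0)
    (hmult : ((L.map (Complex.ofReal ·)).charpoly).rootMultiplicity 0 = 1) :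
    (∀ x : ℕ → (Fin N × Fin n → ℝ),
        (∀ k, x (k + 1) =
          ((1 : Matrix (Fin N) (Fin N) ℝ) ⊗ₖ A - c • (L ⊗ₖ (B * K))).mulVec (x k)) →
        ∀ i j : Fin N,
          Tendsto (fun k => ‖(fun p => x k (i, p) - x k (j, p) : Fin n → ℝ)‖)
            atTop (nhds 0)) ↔
      (∀ lam : ℂ, ((L.map (Complex.ofReal ·)).charpoly).IsRoot lam → lam ≠ 0 →
        ∀ z : ℂ,
          ((A.map (Complex.ofReal ·) - ((c : ℂ) * lam) •
              (B.map (Complex.ofReal ·) * K.map (Complex.ofReal ·))).charpoly).IsRoot z →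
          ‖z‖ < 1) := by
  have h1 : (L.map (Complex.ofReal ·)) *ᵥ (fun _ => (1 : ℂ)) = 0 := by
    ext i
    have := congrFun hL1 i
    simp only [mulVec, dotProduct, mul_one, Pi.zero_apply, map_apply] at this ⊢
    exact_mod_cast this
  constructor
  · intro hcons lam hl hl0 z hz
    refine cis_forward _ _ _ _ h1 ?_ lam z hl hl0 hz
    intro x hx i j p
    rw [← cis_map] at hx
    have hre := hcons (fun k q => (x k q).re) (by
      intro k; ext q
      simp [hx, mulVec, dotProduct]) i j
    have him := hcons (fun k q => (x k q).im) (by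
      intro k; ext q
      simp [hx, mulVec, dotProduct]) i j
    have hre2 := ((continuous_apply p).tendsto _).comp (tendsto_zero_iff_norm_tendsto_zero.2 hre)
    have him2 := ((continuous_apply p).tendsto _).comp (tendsto_zero_iff_norm_tendsto_zero.2 him)
    have h3 := ((Complex.continuous_ofReal.tendsto _).comp hre2).add
      (((Complex.continuous_ofReal.tendsto _).comp him2).mul_const Complex.I)
    simp only [Pi.zero_apply, Complex.ofReal_zero, zero_mul, add_zero] at h3
    refine h3.congr fun k => ?_
    apply Complex.ext <;> simp
  · intro hst x hx i j
    rw [← tendsto_zero_iff_norm_tendsto_zero, tendsto_pi_nhds]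
    intro p
    have := cis_backward _ _ _ _ h1 hmult hst (fun k q => (x k q : ℂ)) (by
      intro k; rw [← cis_map]; ext q
      rw [hx]
      simp [mulVec, dotProduct]) i j p
    have h2 := (Complex.continuous_re.tendsto _).comp this
    simpa [Function.comp_def] using h2
end

section
/- Let L be a real N×N matrix, A an n×n real matrix, B an n×m real matrix, K an m×n real matrix, and c ∈ ℝ. Then the spectrum (set of eigenvalues over ℂ) of the Nn×Nn complex matrix I_N ⊗ A − c·L ⊗ (BK) equals the union, over all eigenvalues λ ∈ ℂ of L, of the spectra of the complex matrices A − cλ·BK. -/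
open Matrix Kronecker Polynomial

lemma aux_root {ι : Type*} [Fintype ι] [DecidableEq ι] (M : Matrix ι ι ℂ) (z : ℂ) :
    M.charpoly.IsRoot z ↔ ∃ v : ι → ℂ, v ≠ 0 ∧ M *ᵥ v = z • v := by
  rw [Polynomial.IsRoot, Matrix.eval_charpoly, ← Matrix.exists_mulVec_eq_zero_iff]
  refine exists_congr fun v => and_congr_right fun _ => ?_
  rw [Matrix.sub_mulVec, sub_eq_zero, eq_comm, Matrix.scalar_apply, ← Matrix.smul_one_eq_diagonal,
    Matrix.smul_mulVec, Matrix.one_mulVec]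

lemma aux_kron {N n : ℕ} (L : Matrix (Fin N) (Fin N) ℂ) (A P : Matrix (Fin n) (Fin n) ℂ)
    (c : ℂ) (X : Matrix (Fin n) (Fin N) ℂ) :
    ((1 : Matrix (Fin N) (Fin N) ℂ) ⊗ₖ A - c • (L ⊗ₖ P)) *ᵥ vec X
      = vec (A * X - c • (P * X * Lᵀ)) := by
  rw [Matrix.sub_mulVec, Matrix.smul_mulVec, Matrix.kronecker_mulVec_vec,
    Matrix.kronecker_mulVec_vec]
  simp

lemma aux_main {N n : ℕ} (L : Matrix (Fin N) (Fin N) ℂ) (A P : Matrix (Fin n) (Fin n) ℂ)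
    (c z : ℂ) :
    ((1 : Matrix (Fin N) (Fin N) ℂ) ⊗ₖ A - c • (L ⊗ₖ P)).charpoly.IsRoot z ↔
      ∃ l : ℂ, L.charpoly.IsRoot l ∧ (A - (c * l) • P).charpoly.IsRoot z := by
  simp only [aux_root]
  constructor
  · rintro ⟨v, hv, h⟩
    obtain ⟨X, rfl⟩ : ∃ X : Matrix (Fin n) (Fin N) ℂ, vec X = v :=
      ⟨Matrix.of fun i j => v (j, i), by ext ⟨i, j⟩; rfl⟩
    rw [aux_kron, ← Matrix.vec_smul, Matrix.vec_inj] at h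
    let W : Submodule ℂ (Matrix (Fin n) (Fin N) ℂ) :=
      { carrier := {Y | A * Y - c • (P * Y * Lᵀ) = z • Y}
        add_mem' := by
          intro Y Z hY hZ
          simp only [Set.mem_setOf_eq] at *
          rw [smul_add, ← hY, ← hZ, Matrix.mul_add, Matrix.mul_add, Matrix.add_mul, smul_add]
          abel
        zero_mem' := by simp
        smul_mem' := by
          intro a Y hY
          simp only [Set.mem_setOf_eq] at *
          rw [smul_comm z a, ← hY, Matrix.mul_smul, Matrix.mul_smul, Matrix.smul_mul, smul_sub,
            smul_comm c a] }
    let R : Module.End ℂ (Matrix (Fin n) (Fin N) ℂ) :=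
      { toFun := fun Y => Y * Lᵀ
        map_add' := fun Y Z => Matrix.add_mul _ _ _
        map_smul' := fun a Y => by simp }
    have hR : ∀ Y ∈ W, R Y ∈ W := by
      intro Y hY
      change A * Y - c • (P * Y * Lᵀ) = z • Y at hY
      change A * (Y * Lᵀ) - c • (P * (Y * Lᵀ) * Lᵀ) = z • (Y * Lᵀ)
      rw [← Matrix.smul_mul z, ← hY, Matrix.sub_mul, Matrix.smul_mul]
      simp only [Matrix.mul_assoc]
    have hX : X ≠ 0 := by
      rintro rfl
      exact hv (by ext; rfl)
    haveI : Nontrivial W := ⟨⟨X, h⟩, 0, fun e => hX (congrArg Subtype.val e)⟩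
    obtain ⟨l, hl⟩ := Module.End.exists_eigenvalue (R.restrict hR)
    obtain ⟨⟨Y, hYW⟩, hY⟩ := hl.exists_hasEigenvector
    have h1 : Y * Lᵀ = l • Y := congrArg Subtype.val hY.apply_eq_smul
    have h2 : Y ≠ 0 := fun e => hY.2 (Subtype.ext e)
    change A * Y - c • (P * Y * Lᵀ) = z • Y at hYW
    obtain ⟨i, j, hij⟩ : ∃ i j, Y i j ≠ 0 := by
      by_contra! hh
      exact h2 (by ext i j; exact hh i j)
    refine ⟨l, ⟨fun k => Y i k, fun e => hij (congrFun e j), ?_⟩,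
      fun k => Y k j, fun e => hij (congrFun e i), ?_⟩
    · ext k
      have := congrFun (congrFun h1 i) k
      simp only [Matrix.mul_apply, Matrix.transpose_apply, Matrix.smul_apply] at this
      simp only [Matrix.mulVec, dotProduct, Pi.smul_apply, ← this]
      exact Finset.sum_congr rfl fun _ _ => mul_comm _ _
    · rw [Matrix.mul_assoc, h1, Matrix.mul_smul, smul_smul, ← Matrix.smul_mul,
        ← Matrix.sub_mul] at hYW
      ext k
      exact congrFun (congrFun hYW k) j
  · rintro ⟨l, ⟨u, hu, hLu⟩, w, hw, hAw⟩
    refine ⟨vec (Matrix.vecMulVec w u), ?_, ?_⟩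
    · obtain ⟨i, hi⟩ := Function.ne_iff.mp hu
      obtain ⟨j, hj⟩ := Function.ne_iff.mp hw
      intro e
      exact mul_ne_zero hj hi (congrFun e (i, j))
    · rw [aux_kron, ← Matrix.vec_smul, Matrix.vec_inj, Matrix.mul_assoc,
        Matrix.vecMulVec_mul, Matrix.vecMul_transpose, hLu, Matrix.mul_vecMulVec,
        Matrix.mul_vecMulVec]
      rw [Matrix.sub_mulVec, Matrix.smul_mulVec] at hAw
      ext i j
      have := congrFun hAw i
      simp only [Pi.sub_apply, Pi.smul_apply, smul_eq_mul] at this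
      simp only [Matrix.sub_apply, Matrix.smul_apply, Matrix.vecMulVec_apply, Pi.smul_apply,
        smul_eq_mul]
      linear_combination (u j) * this

/-- The spectrum (set of roots of the characteristic polynomial over ℂ) of
`I_N ⊗ A − c·L ⊗ (BK)` equals the union, over the eigenvalues `λ` of `L`,
of the spectra of `A − cλ·BK`. -/
theorem spectrum_kronecker_union (N n m : ℕ)
    (L : Matrix (Fin N) (Fin N) ℝ)
    (A : Matrix (Fin n) (Fin n) ℝ) (B : Matrix (Fin n) (Fin m) ℝ)
    (K : Matrix (Fin m) (Fin n) ℝ) (c : ℝ) :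
    {z : ℂ |
        (((1 : Matrix (Fin N) (Fin N) ℂ) ⊗ₖ (A.map (Complex.ofReal ·)) -
            (c : ℂ) • ((L.map (Complex.ofReal ·)) ⊗ₖ
              (B.map (Complex.ofReal ·) * K.map (Complex.ofReal ·)))).charpoly).IsRoot z}
      = ⋃ lam ∈ {l : ℂ | ((L.map (Complex.ofReal ·)).charpoly).IsRoot l},
          {z : ℂ |
            ((A.map (Complex.ofReal ·) - ((c : ℂ) * lam) •
                (B.map (Complex.ofReal ·) * K.map (Complex.ofReal ·))).charpoly).IsRoot z} := by
  ext z
  simp only [Set.mem_setOf_eq, Set.mem_iUnion, exists_prop]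
  exact aux_main _ _ _ _ _
end

section
/- Let A ∈ ℝ^{n×n}, B ∈ ℝ^{n×m}, R ∈ ℝ^{m×m} symmetric positive definite, C ∈ ℝ^{p×n}, and Q = CᵀC. Assume (A,B) is controllable, i.e., the n×(nm) controllability matrix [B, AB, …, A^{n−1}B] has rank n, and (A,C) is observable, i.e., the (pn)×n matrix obtained by stacking C, CA, …, CA^{n−1} has rank n. Consider the Riccati iteration P_{k+1} = Aᵀ(P_k − P_k B (BᵀP_k B + R)⁻¹ BᵀP_k)A + Q. Then there exists a symmetric positive definite matrix P such that: (i) for every symmetric positive semidefinite initial matrix P_0, the sequence P_k converges to P as k → ∞; and (ii) P is the unique symmetric positive semidefinite solution of the algebraic Riccati equation P = Aᵀ(P − P B (BᵀP B + R)⁻¹ BᵀP)A + Q. -/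
open Matrix Filter

namespace RicAux

/-- quadratic form -/
noncomputable def q {n : ℕ} (P : Matrix (Fin n) (Fin n) ℝ) (x : Fin n → ℝ) : ℝ := x ⬝ᵥ P *ᵥ x

/-- Riccati map -/
noncomputable def ric {n m p : ℕ} (A : Matrix (Fin n) (Fin n) ℝ) (B : Matrix (Fin n) (Fin m) ℝ)
    (R : Matrix (Fin m) (Fin m) ℝ) (C : Matrix (Fin p) (Fin n) ℝ)
    (P : Matrix (Fin n) (Fin n) ℝ) : Matrix (Fin n) (Fin n) ℝ :=
  Aᵀ * (P - P * B * (Bᵀ * P * B + R)⁻¹ * Bᵀ * P) * A + Cᵀ * C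

/-- optimal gain -/
noncomputable def gain {n m : ℕ} (A : Matrix (Fin n) (Fin n) ℝ) (B : Matrix (Fin n) (Fin m) ℝ)
    (R : Matrix (Fin m) (Fin m) ℝ)
    (P : Matrix (Fin n) (Fin n) ℝ) : Matrix (Fin m) (Fin n) ℝ :=
  -((Bᵀ * P * B + R)⁻¹ * Bᵀ * P * A)

variable {n m p : ℕ}

lemma q_nonneg {P : Matrix (Fin n) (Fin n) ℝ} (h : P.PosSemidef) (x : Fin n → ℝ) : 0 ≤ q P x := by
  have := h.dotProduct_mulVec_nonneg x
  simpa [q] using this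

lemma symm_of {P : Matrix (Fin n) (Fin n) ℝ} (h : P.PosSemidef) : Pᵀ = P := by
  have := h.1
  rwa [IsHermitian, conjTranspose_eq_transpose_of_trivial] at this

lemma psd_of {P : Matrix (Fin n) (Fin n) ℝ} (h : Pᵀ = P) (h2 : ∀ x, 0 ≤ q P x) : P.PosSemidef := by
  refine .of_dotProduct_mulVec_nonneg ?_ (by simpa [q] using h2)
  rwa [IsHermitian, conjTranspose_eq_transpose_of_trivial]

lemma dot_tr {k l : ℕ} (M : Matrix (Fin k) (Fin l) ℝ) (x : Fin l → ℝ) (y : Fin k → ℝ) :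
    x ⬝ᵥ Mᵀ *ᵥ y = (M *ᵥ x) ⬝ᵥ y := by
  rw [dotProduct_mulVec, vecMul_transpose]

lemma S_posDef (B : Matrix (Fin n) (Fin m) ℝ)
    {R : Matrix (Fin m) (Fin m) ℝ} (hR : R.PosDef) {P : Matrix (Fin n) (Fin n) ℝ}
    (hP : P.PosSemidef) : (Bᵀ * P * B + R).PosDef := by
  have := hP.conjTranspose_mul_mul_same B
  rw [conjTranspose_eq_transpose_of_trivial] at this
  exact PosDef.posSemidef_add this hR

lemma ric_sq (A : Matrix (Fin n) (Fin n) ℝ) (B : Matrix (Fin n) (Fin m) ℝ)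
    {R : Matrix (Fin m) (Fin m) ℝ} (C : Matrix (Fin p) (Fin n) ℝ)
    (hR : R.PosDef) {P : Matrix (Fin n) (Fin n) ℝ}
    (hP : P.PosSemidef) (x : Fin n → ℝ) (u : Fin m → ℝ) :
    q (ric A B R C P) x + q (Bᵀ * P * B + R) (u - gain A B R P *ᵥ x)
      = q P (A *ᵥ x + B *ᵥ u) + q R u + (C *ᵥ x) ⬝ᵥ (C *ᵥ x) := by
  have hS := S_posDef B hR hP
  have hSs := symm_of hS.posSemidef
  have hPs := symm_of hP
  have hdet : IsUnit (Bᵀ * P * B + R).det := (isUnit_iff_isUnit_det _).1 hS.isUnit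
  set S := Bᵀ * P * B + R with hSdef
  set y := A *ᵥ x with hy
  set v := Bᵀ *ᵥ P *ᵥ y with hv
  set w := S⁻¹ *ᵥ v with hw
  have hSw : S *ᵥ w = v := by
    rw [hw, mulVec_mulVec, mul_nonsing_inv _ hdet, one_mulVec]
  have hg : gain A B R P *ᵥ x = - w := by
    simp only [gain, neg_mulVec, ← mulVec_mulVec, hw, hv, hy, hSdef]
  have h1 : q (ric A B R C P) x = y ⬝ᵥ P *ᵥ y - v ⬝ᵥ w + (C *ᵥ x) ⬝ᵥ (C *ᵥ x) := by
    have : v ⬝ᵥ w = y ⬝ᵥ P *ᵥ B *ᵥ w := by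
      conv_rhs => rw [← hPs]
      rw [dot_tr, ← transpose_transpose B, dot_tr]
    rw [this]
    simp only [q, ric, add_mulVec, dotProduct_add, ← mulVec_mulVec, dot_tr, sub_mulVec,
      dotProduct_sub, hw, hv, hy, hSdef]
  have hsym : ∀ a b : Fin m → ℝ, a ⬝ᵥ S *ᵥ b = b ⬝ᵥ S *ᵥ a := by
    intro a b
    conv_lhs => rw [← hSs, dot_tr, dotProduct_comm]
  have hsymP : ∀ a b : Fin n → ℝ, a ⬝ᵥ P *ᵥ b = b ⬝ᵥ P *ᵥ a := by
    intro a b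
    conv_lhs => rw [← hPs, dot_tr, dotProduct_comm]
  have h2 : q S (u - -w) = u ⬝ᵥ S *ᵥ u + 2 * (u ⬝ᵥ v) + v ⬝ᵥ w := by
    simp only [q, sub_neg_eq_add, mulVec_add, dotProduct_add, add_dotProduct]
    rw [hsym w u, hSw, dotProduct_comm w v]; ring
  have h3 : u ⬝ᵥ S *ᵥ u = (B *ᵥ u) ⬝ᵥ P *ᵥ (B *ᵥ u) + u ⬝ᵥ R *ᵥ u := by
    simp only [hSdef, add_mulVec, dotProduct_add, ← mulVec_mulVec, dot_tr]
  have h4 : u ⬝ᵥ v = (B *ᵥ u) ⬝ᵥ P *ᵥ y := by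
    rw [hv, dot_tr]
  rw [h1, hg, h2, h3, h4]
  simp only [q, mulVec_add, dotProduct_add, add_dotProduct]
  rw [hsymP y (B *ᵥ u)]; ring

lemma ric_opt (A : Matrix (Fin n) (Fin n) ℝ) (B : Matrix (Fin n) (Fin m) ℝ)
    {R : Matrix (Fin m) (Fin m) ℝ} (C : Matrix (Fin p) (Fin n) ℝ)
    (hR : R.PosDef) {P : Matrix (Fin n) (Fin n) ℝ}
    (hP : P.PosSemidef) (x : Fin n → ℝ) :
    q (ric A B R C P) x = q P (A *ᵥ x + B *ᵥ (gain A B R P *ᵥ x)) + q R (gain A B R P *ᵥ x)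
      + (C *ᵥ x) ⬝ᵥ (C *ᵥ x) := by
  rw [← ric_sq A B C hR hP]; simp [q]

lemma ric_le (A : Matrix (Fin n) (Fin n) ℝ) (B : Matrix (Fin n) (Fin m) ℝ)
    {R : Matrix (Fin m) (Fin m) ℝ} (C : Matrix (Fin p) (Fin n) ℝ)
    (hR : R.PosDef) {P : Matrix (Fin n) (Fin n) ℝ}
    (hP : P.PosSemidef) (x : Fin n → ℝ) (u : Fin m → ℝ) :
    q (ric A B R C P) x ≤ q P (A *ᵥ x + B *ᵥ u) + q R u + (C *ᵥ x) ⬝ᵥ (C *ᵥ x) := by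
  rw [← ric_sq A B C hR hP]
  linarith [q_nonneg (S_posDef B hR hP).posSemidef (u - gain A B R P *ᵥ x)]

lemma dot_self_nonneg {k : ℕ} (x : Fin k → ℝ) : 0 ≤ x ⬝ᵥ x := by
  simpa using dotProduct_star_self_nonneg x

lemma ric_psd (A : Matrix (Fin n) (Fin n) ℝ) (B : Matrix (Fin n) (Fin m) ℝ)
    {R : Matrix (Fin m) (Fin m) ℝ} (C : Matrix (Fin p) (Fin n) ℝ)
    (hR : R.PosDef) {P : Matrix (Fin n) (Fin n) ℝ}
    (hP : P.PosSemidef) : (ric A B R C P).PosSemidef := by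
  refine psd_of ?_ fun x => ?_
  · have hS := symm_of (S_posDef B hR hP).posSemidef
    simp only [ric, transpose_add, transpose_mul, transpose_sub, transpose_transpose,
      transpose_nonsing_inv, symm_of hP, symm_of hR.posSemidef, Matrix.mul_assoc]
  · rw [ric_opt A B C hR hP]
    have := q_nonneg hP (A *ᵥ x + B *ᵥ (gain A B R P *ᵥ x))
    have := q_nonneg hR.posSemidef (gain A B R P *ᵥ x)
    have := dot_self_nonneg (C *ᵥ x)
    linarith

lemma ric_mono (A : Matrix (Fin n) (Fin n) ℝ) (B : Matrix (Fin n) (Fin m) ℝ)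
    {R : Matrix (Fin m) (Fin m) ℝ} (C : Matrix (Fin p) (Fin n) ℝ)
    (hR : R.PosDef) {P P' : Matrix (Fin n) (Fin n) ℝ}
    (hP : P.PosSemidef) (hP' : P'.PosSemidef) (h : ∀ x, q P x ≤ q P' x) (x : Fin n → ℝ) :
    q (ric A B R C P) x ≤ q (ric A B R C P') x := by
  rw [ric_opt A B C hR hP']
  have := ric_le A B C hR hP x (gain A B R P' *ᵥ x)
  have := h (A *ᵥ x + B *ᵥ (gain A B R P' *ᵥ x))
  linarith

lemma entry {P : Matrix (Fin n) (Fin n) ℝ} (hP : Pᵀ = P) (i j : Fin n) :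
    P i j = (q P (Pi.single i 1 + Pi.single j 1) - q P (Pi.single i 1) - q P (Pi.single j 1)) / 2 := by
  have : P j i = P i j := by conv_lhs => rw [← hP, transpose_apply]
  simp [q, mulVec_add, dotProduct_add, add_dotProduct]
  rw [this]; ring

lemma mat_tendsto {Ps : ℕ → Matrix (Fin n) (Fin n) ℝ} {P : Matrix (Fin n) (Fin n) ℝ}
    (h : ∀ i j, Tendsto (fun k => Ps k i j) atTop (nhds (P i j))) :
    Tendsto Ps atTop (nhds P) :=
  tendsto_pi_nhds.2 fun i => tendsto_pi_nhds.2 fun j => h i j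

lemma tendsto_of_q {Ps : ℕ → Matrix (Fin n) (Fin n) ℝ} {P : Matrix (Fin n) (Fin n) ℝ}
    (hs : ∀ k, (Ps k)ᵀ = Ps k) (hP : Pᵀ = P)
    (h : ∀ x, Tendsto (fun k => q (Ps k) x) atTop (nhds (q P x))) :
    Tendsto Ps atTop (nhds P) := by
  refine mat_tendsto fun i j => ?_
  rw [entry hP]
  simp_rw [fun k => entry (hs k) i j]
  exact (((h _).sub (h _)).sub (h _)).div_const 2

lemma q_tendsto {Ps : ℕ → Matrix (Fin n) (Fin n) ℝ} {P : Matrix (Fin n) (Fin n) ℝ}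
    (h : Tendsto Ps atTop (nhds P)) (x : Fin n → ℝ) :
    Tendsto (fun k => q (Ps k) x) atTop (nhds (q P x)) := by
  have : Continuous fun M : Matrix (Fin n) (Fin n) ℝ => q M x := by
    unfold q; fun_prop
  exact (this.tendsto P).comp h

lemma exists_lim {Ps : ℕ → Matrix (Fin n) (Fin n) ℝ}
    (hs : ∀ k, (Ps k).PosSemidef)
    (h : ∀ x, ∃ l, Tendsto (fun k => q (Ps k) x) atTop (nhds l)) :
    ∃ P : Matrix (Fin n) (Fin n) ℝ, P.PosSemidef ∧ Tendsto Ps atTop (nhds P) := by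
  choose l hl using h
  have h1 : ∃ P, Tendsto Ps atTop (nhds P) := by
    refine ⟨Matrix.of fun i j =>
      (l (Pi.single i 1 + Pi.single j 1) - l (Pi.single i 1) - l (Pi.single j 1)) / 2, ?_⟩
    refine mat_tendsto fun i j => ?_
    simp_rw [fun k => entry (symm_of (hs k)) i j]
    exact (((hl _).sub (hl _)).sub (hl _)).div_const 2
  obtain ⟨P, hP⟩ := h1
  refine ⟨P, psd_of ?_ fun x => ?_, hP⟩
  · have h2 : Tendsto (fun k => (Ps k)ᵀ) atTop (nhds Pᵀ) :=
      ((continuous_id.matrix_transpose).tendsto P).comp hP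
    simp_rw [fun k => symm_of (hs k)] at h2
    exact tendsto_nhds_unique h2 hP
  · exact ge_of_tendsto' (q_tendsto hP x) fun k => q_nonneg (hs k) x

lemma ric_tendsto (A : Matrix (Fin n) (Fin n) ℝ) (B : Matrix (Fin n) (Fin m) ℝ)
    {R : Matrix (Fin m) (Fin m) ℝ} (C : Matrix (Fin p) (Fin n) ℝ)
    (hR : R.PosDef) {Ps : ℕ → Matrix (Fin n) (Fin n) ℝ} {P : Matrix (Fin n) (Fin n) ℝ}
    (hP : P.PosSemidef) (h : Tendsto Ps atTop (nhds P)) :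
    Tendsto (fun k => ric A B R C (Ps k)) atTop (nhds (ric A B R C P)) := by
  have hS := S_posDef B hR hP
  have hinv : Tendsto (fun k => (Bᵀ * Ps k * B + R)⁻¹) atTop (nhds (Bᵀ * P * B + R)⁻¹) := by
    have h1 : ContinuousAt Inv.inv (Bᵀ * P * B + R) := by
      apply continuousAt_matrix_inv
      rw [Ring.inverse_eq_inv']
      exact continuousAt_inv₀ hS.det_pos.ne'
    have h2 : Continuous fun P : Matrix (Fin n) (Fin n) ℝ => Bᵀ * P * B + R := by fun_prop
    exact h1.tendsto.comp ((h2.tendsto P).comp h)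
  have hc : Continuous fun z : Matrix (Fin n) (Fin n) ℝ × Matrix (Fin m) (Fin m) ℝ =>
      Aᵀ * (z.1 - z.1 * B * z.2 * Bᵀ * z.1) * A + Cᵀ * C := by fun_prop
  have h3 := (hc.tendsto (P, (Bᵀ * P * B + R)⁻¹)).comp (h.prodMk_nhds hinv)
  simp only [Function.comp_def] at h3
  exact h3

lemma rinv {ι : Type*} [Fintype ι] {M : Matrix (Fin n) ι ℝ} (h : M.rank = n) :
    ∃ N : Matrix ι (Fin n) ℝ, M * N = 1 := by
  rw [← mulVec_surjective_iff_exists_right_inverse]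
  have : LinearMap.range M.mulVecLin = ⊤ := by
    apply Submodule.eq_top_of_finrank_eq
    rw [Module.finrank_fin_fun]; exact h
  exact LinearMap.range_eq_top.1 this

lemma posDef_tendsto {R : Matrix (Fin m) (Fin m) ℝ} (hR : R.PosDef) {u : ℕ → Fin m → ℝ}
    (h : Tendsto (fun k => q R (u k)) atTop (nhds 0)) : Tendsto u atTop (nhds 0) := by
  have hM : ∃ M : Matrix (Fin m) (Fin m) ℝ, R = Mᵀ * M := by
    open scoped MatrixOrder in
    obtain ⟨M, hM⟩ := CStarAlgebra.nonneg_iff_eq_star_mul_self.mp hR.posSemidef.nonneg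
    exact ⟨M, by rw [hM, star_eq_conjTranspose, conjTranspose_eq_transpose_of_trivial]⟩
  obtain ⟨M, rfl⟩ := hM
  have h1 : Tendsto (fun k => M *ᵥ u k) atTop (nhds 0) := by
    rw [tendsto_pi_nhds]; intro i
    have h2 : Tendsto (fun k => ((M *ᵥ u k) i) ^ 2) atTop (nhds 0) := by
      refine squeeze_zero (fun k => sq_nonneg _) (fun k => ?_) h
      simp only [q, ← mulVec_mulVec, dot_tr]
      rw [dotProduct, sq]
      exact Finset.single_le_sum (f := fun i => (M *ᵥ u k) i * (M *ᵥ u k) i)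
        (fun i _ => mul_self_nonneg _) (Finset.mem_univ i)
    have h3 := (Real.continuous_sqrt.tendsto 0).comp h2
    simp only [Function.comp_def, Real.sqrt_sq_eq_abs, Real.sqrt_zero] at h3
    exact (tendsto_zero_iff_abs_tendsto_zero _).2 h3
  have hu : IsUnit (Mᵀ * M).det := (isUnit_iff_isUnit_det _).1 hR.isUnit
  have h4 : Continuous fun v : Fin m → ℝ => ((Mᵀ * M)⁻¹ * Mᵀ) *ᵥ v := by fun_prop
  have h5 := (h4.tendsto 0).comp h1
  simpa [Function.comp_def, Matrix.mul_assoc, nonsing_inv_mul _ hu] using h5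


lemma obs_tendsto {A : Matrix (Fin n) (Fin n) ℝ} {C : Matrix (Fin p) (Fin n) ℝ}
    (hobs : (Matrix.of fun (q : Fin n × Fin p) (j : Fin n) =>
      (C * A ^ (q.1 : ℕ)) q.2 j).rank = n) {z : ℕ → Fin n → ℝ}
    (h : ∀ i : ℕ, Tendsto (fun k => C *ᵥ (A ^ i *ᵥ z k)) atTop (nhds 0)) :
    Tendsto z atTop (nhds 0) := by
  rw [← rank_transpose] at hobs
  obtain ⟨N, hN⟩ := rinv hobs
  have hN' := congrArg transpose hN
  rw [transpose_mul, transpose_transpose, transpose_one] at hN'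
  set O := (Matrix.of fun (q : Fin n × Fin p) (j : Fin n) => (C * A ^ (q.1 : ℕ)) q.2 j) with hO
  have h1 : Tendsto (fun k => O *ᵥ z k) atTop (nhds 0) := by
    rw [tendsto_pi_nhds]; rintro ⟨i, j⟩
    have := (tendsto_pi_nhds.1 (h i)) j
    simp only [mulVec_mulVec] at this
    exact this
  have h4 : Continuous fun v : Fin n × Fin p → ℝ => Nᵀ *ᵥ v := by fun_prop
  have h5 := (h4.tendsto 0).comp h1
  simpa [Function.comp_def, hN'] using h5

lemma ctrb_exists {A : Matrix (Fin n) (Fin n) ℝ} {B : Matrix (Fin n) (Fin m) ℝ}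
    (hctrb : (Matrix.of fun (i : Fin n) (q : Fin n × Fin m) =>
      (A ^ (q.1 : ℕ) * B) i q.2).rank = n) (x : Fin n → ℝ) :
    ∃ w : ℕ → Fin m → ℝ, A ^ n *ᵥ x + ∑ i ∈ Finset.range n, A ^ i *ᵥ (B *ᵥ w i) = 0 := by
  obtain ⟨N, hN⟩ := rinv hctrb
  set v : Fin n × Fin m → ℝ := N *ᵥ (-(A ^ n *ᵥ x)) with hv
  refine ⟨fun i => if h : i < n then fun j => v (⟨i, h⟩, j) else 0, ?_⟩
  have h1 : (Matrix.of fun (i : Fin n) (q : Fin n × Fin m) =>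
      (A ^ (q.1 : ℕ) * B) i q.2) *ᵥ v = -(A ^ n *ᵥ x) := by
    rw [hv, mulVec_mulVec, hN, one_mulVec]
  rw [add_comm, add_eq_zero_iff_eq_neg, ← h1, Finset.sum_range]
  ext r
  simp only [Finset.sum_apply, mulVec_mulVec]
  simp [mulVec, dotProduct, Fintype.sum_prod_type]

lemma bounded_step {A : Matrix (Fin n) (Fin n) ℝ} {B : Matrix (Fin n) (Fin m) ℝ}
    {R : Matrix (Fin m) (Fin m) ℝ} {C : Matrix (Fin p) (Fin n) ℝ} (hR : R.PosDef)
    {Ps : ℕ → Matrix (Fin n) (Fin n) ℝ} (hpsd : ∀ k, (Ps k).PosSemidef) (h0 : Ps 0 = 0)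
    (hs : ∀ k, Ps (k + 1) = ric A B R C (Ps k)) (w : ℕ → Fin m → ℝ) (j : ℕ) :
    ∀ x, A ^ j *ᵥ x + ∑ i ∈ Finset.range j, A ^ i *ᵥ (B *ᵥ w i) = 0 →
      ∃ c, ∀ k, q (Ps k) x ≤ c := by
  induction j with
  | zero =>
    intro x hx
    have : x = 0 := by simpa using hx
    exact ⟨0, fun k => by simp [this, q]⟩
  | succ j ih =>
    intro x hx
    obtain ⟨c, hc⟩ := ih (A *ᵥ x + B *ᵥ w j) (by
      rw [← hx, Finset.sum_range_succ, pow_succ, ← mulVec_mulVec, mulVec_add]; abel)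
    have hRn := q_nonneg hR.posSemidef (w j)
    have hCn := dot_self_nonneg (C *ᵥ x)
    have hc0 := (q_nonneg (hpsd 0) _).trans (hc 0)
    refine ⟨c + q R (w j) + (C *ᵥ x) ⬝ᵥ (C *ᵥ x), fun k => ?_⟩
    cases k with
    | zero => rw [h0]; simp only [q, zero_mulVec, dotProduct_zero] at *; linarith
    | succ k =>
      rw [hs]
      have := ric_le A B C hR (hpsd k) x (w j)
      linarith [hc k]

lemma exists_fix {A : Matrix (Fin n) (Fin n) ℝ} {B : Matrix (Fin n) (Fin m) ℝ}
    {R : Matrix (Fin m) (Fin m) ℝ} {C : Matrix (Fin p) (Fin n) ℝ} (hR : R.PosDef)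
    (hctrb : (Matrix.of fun (i : Fin n) (q : Fin n × Fin m) =>
      (A ^ (q.1 : ℕ) * B) i q.2).rank = n)
    {Ps : ℕ → Matrix (Fin n) (Fin n) ℝ} (hpsd : ∀ k, (Ps k).PosSemidef) (h0 : Ps 0 = 0)
    (hs : ∀ k, Ps (k + 1) = ric A B R C (Ps k)) :
    ∃ P : Matrix (Fin n) (Fin n) ℝ, P.PosSemidef ∧ Tendsto Ps atTop (nhds P) ∧
      P = ric A B R C P := by
  have hmono : ∀ k x, q (Ps k) x ≤ q (Ps (k + 1)) x := by
    intro k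
    induction k with
    | zero => intro x; rw [h0]; simpa [q] using q_nonneg (hpsd 1) x
    | succ k ih =>
      intro x
      rw [hs k, hs (k + 1)]
      exact ric_mono A B C hR (hpsd k) (hpsd (k + 1)) ih x
  obtain ⟨P, hP, hlim⟩ := exists_lim hpsd (fun x => by
    obtain ⟨w, hw⟩ := ctrb_exists hctrb x
    obtain ⟨c, hc⟩ := bounded_step hR hpsd h0 hs w n x hw
    exact ⟨_, tendsto_atTop_ciSup (monotone_nat_of_le_succ fun k => hmono k x)
      ⟨c, by rintro _ ⟨k, rfl⟩; exact hc k⟩⟩)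
  refine ⟨P, hP, hlim, ?_⟩
  have h1 := ric_tendsto A B C hR hP hlim
  simp_rw [← hs] at h1
  exact tendsto_nhds_unique ((tendsto_add_atTop_iff_nat 1).2 hlim) h1

lemma fix_step {A : Matrix (Fin n) (Fin n) ℝ} {B : Matrix (Fin n) (Fin m) ℝ}
    {R : Matrix (Fin m) (Fin m) ℝ} {C : Matrix (Fin p) (Fin n) ℝ} (hR : R.PosDef)
    {P : Matrix (Fin n) (Fin n) ℝ} (hP : P.PosSemidef) (hfix : P = ric A B R C P)
    (x : Fin n → ℝ) :
    q P x = q P ((A + B * gain A B R P) *ᵥ x) + q R (gain A B R P *ᵥ x)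
      + (C *ᵥ x) ⬝ᵥ (C *ᵥ x) := by
  have := ric_opt A B C hR hP x
  rw [← hfix] at this
  rw [this, add_mulVec, ← mulVec_mulVec]

/-- A trajectory of the closed loop along which the cost decrements vanish tends to zero. -/
lemma traj_zero {A : Matrix (Fin n) (Fin n) ℝ} {B : Matrix (Fin n) (Fin m) ℝ}
    {R : Matrix (Fin m) (Fin m) ℝ} {C : Matrix (Fin p) (Fin n) ℝ} (hR : R.PosDef)
    (hobs : (Matrix.of fun (q : Fin n × Fin p) (j : Fin n) =>
      (C * A ^ (q.1 : ℕ)) q.2 j).rank = n)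
    {P : Matrix (Fin n) (Fin n) ℝ} (hP : P.PosSemidef) (hfix : P = ric A B R C P)
    (z : ℕ → Fin n → ℝ) (hz : ∀ k, z (k + 1) = (A + B * gain A B R P) *ᵥ z k) :
    Tendsto z atTop (nhds 0) := by
  have hstep : ∀ k, q P (z k) = q P (z (k + 1)) + q R (gain A B R P *ᵥ z k)
      + (C *ᵥ z k) ⬝ᵥ (C *ᵥ z k) := fun k => by rw [hz]; exact fix_step hR hP hfix _
  have hRn : ∀ k, 0 ≤ q R (gain A B R P *ᵥ z k) := fun k => q_nonneg hR.posSemidef _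
  have hCn : ∀ k, 0 ≤ (C *ᵥ z k) ⬝ᵥ (C *ᵥ z k) := fun k => dot_self_nonneg _
  have hanti : Antitone fun k => q P (z k) :=
    antitone_nat_of_succ_le fun k => by linarith [hstep k, hRn k, hCn k]
  have hlim := tendsto_atTop_ciInf hanti ⟨0, by rintro _ ⟨k, rfl⟩; exact q_nonneg hP _⟩
  have hdiff := hlim.sub ((tendsto_add_atTop_iff_nat 1).2 hlim)
  rw [sub_self] at hdiff
  have hK : Tendsto (fun k => gain A B R P *ᵥ z k) atTop (nhds 0) :=
    posDef_tendsto hR (squeeze_zero hRn (fun k => by linarith [hstep k, hCn k]) hdiff)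
  have hC : Tendsto (fun k => C *ᵥ z k) atTop (nhds 0) := by
    refine posDef_tendsto (R := 1) PosDef.one ?_
    simp only [q, one_mulVec]
    exact squeeze_zero hCn (fun k => by linarith [hstep k, hRn k]) hdiff
  refine obs_tendsto hobs fun i => ?_
  induction i with
  | zero => simpa using hC
  | succ i ih =>
    have h1 := (tendsto_add_atTop_iff_nat 1).2 ih
    have h2 : Continuous fun v : Fin m → ℝ => C *ᵥ (A ^ i *ᵥ (B *ᵥ v)) := by fun_prop
    have h3 := h1.sub ((h2.tendsto 0).comp hK)
    simp only [mulVec_zero, sub_zero] at h3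
    refine h3.congr fun k => ?_
    simp only [Function.comp_def, hz, ← mulVec_sub, add_mulVec, ← mulVec_mulVec,
      add_sub_cancel_right, pow_succ]

lemma fix_posDef {A : Matrix (Fin n) (Fin n) ℝ} {B : Matrix (Fin n) (Fin m) ℝ}
    {R : Matrix (Fin m) (Fin m) ℝ} {C : Matrix (Fin p) (Fin n) ℝ} (hR : R.PosDef)
    (hobs : (Matrix.of fun (q : Fin n × Fin p) (j : Fin n) =>
      (C * A ^ (q.1 : ℕ)) q.2 j).rank = n)
    {P : Matrix (Fin n) (Fin n) ℝ} (hP : P.PosSemidef) (hfix : P = ric A B R C P) :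
    P.PosDef := by
  refine .of_dotProduct_mulVec_pos hP.1 fun x hx => ?_
  have h0 : 0 ≤ q P x := q_nonneg hP x
  rcases h0.lt_or_eq with h | h
  · simpa [q] using h
  exfalso
  apply hx
  have key : ∀ i : ℕ, q P (A ^ i *ᵥ x) = 0 ∧ C *ᵥ (A ^ i *ᵥ x) = 0 := by
    have aux : ∀ y, q P y = 0 → q P (A *ᵥ y) = 0 ∧ C *ᵥ y = 0 := by
      intro y hy
      have h1 := fix_step hR hP hfix y
      have h2 := q_nonneg hP ((A + B * gain A B R P) *ᵥ y)
      have h3 := q_nonneg hR.posSemidef (gain A B R P *ᵥ y)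
      have h4 := dot_self_nonneg (C *ᵥ y)
      have h5 : gain A B R P *ᵥ y = 0 := by
        by_contra hne
        have := hR.dotProduct_mulVec_pos hne
        have : 0 < q R (gain A B R P *ᵥ y) := by simpa [q] using this
        linarith
      refine ⟨?_, dotProduct_self_eq_zero.1 (by linarith)⟩
      have h6 : (A + B * gain A B R P) *ᵥ y = A *ᵥ y := by
        rw [add_mulVec, ← mulVec_mulVec, h5, mulVec_zero, add_zero]
      rw [h6] at h1 h2
      linarith
    intro i
    induction i with
    | zero => simpa using ⟨h.symm, (aux x h.symm).2⟩
    | succ i ih =>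
      have h1 := (aux _ ih.1).1
      rw [mulVec_mulVec, ← pow_succ'] at h1
      exact ⟨h1, (aux _ h1).2⟩
  have := obs_tendsto hobs (z := fun _ => x) (fun i => by simp [(key i).2])
  exact tendsto_nhds_unique tendsto_const_nhds this

lemma converges {A : Matrix (Fin n) (Fin n) ℝ} {B : Matrix (Fin n) (Fin m) ℝ}
    {R : Matrix (Fin m) (Fin m) ℝ} {C : Matrix (Fin p) (Fin n) ℝ} (hR : R.PosDef)
    (hobs : (Matrix.of fun (q : Fin n × Fin p) (j : Fin n) =>
      (C * A ^ (q.1 : ℕ)) q.2 j).rank = n)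
    {P : Matrix (Fin n) (Fin n) ℝ} (hP : P.PosSemidef) (hfix : P = ric A B R C P)
    {Zs : ℕ → Matrix (Fin n) (Fin n) ℝ} (hZpsd : ∀ k, (Zs k).PosSemidef) (hZ0 : Zs 0 = 0)
    (hZ : ∀ k, Zs (k + 1) = ric A B R C (Zs k)) (hZlim : Tendsto Zs atTop (nhds P))
    {Ps : ℕ → Matrix (Fin n) (Fin n) ℝ} (hpsd : ∀ k, (Ps k).PosSemidef)
    (hs : ∀ k, Ps (k + 1) = ric A B R C (Ps k)) : Tendsto Ps atTop (nhds P) := by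
  refine tendsto_of_q (fun k => symm_of (hpsd k)) (symm_of hP) fun x => ?_
  set D := A + B * gain A B R P with hD
  have hlow : ∀ k x, q (Zs k) x ≤ q (Ps k) x := by
    intro k
    induction k with
    | zero => intro x; rw [hZ0]; simpa [q] using q_nonneg (hpsd 0) x
    | succ k ih => intro x; rw [hZ, hs]; exact ric_mono A B C hR (hZpsd k) (hpsd k) ih x
  have hup : ∀ k x, q (Ps k) x ≤ q P x + (q (Ps 0) (D ^ k *ᵥ x) - q P (D ^ k *ᵥ x)) := by
    intro k
    induction k with
    | zero => intro x; simp
    | succ k ih =>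
      intro x
      have h1 := ric_le A B C hR (hpsd k) x (gain A B R P *ᵥ x)
      have h2 := fix_step hR hP hfix x
      have h3 := ih (D *ᵥ x)
      rw [mulVec_mulVec, ← pow_succ] at h3
      rw [mulVec_mulVec, ← add_mulVec, ← hs] at h1
      rw [← hD] at h1 h2
      linarith
  have hz : Tendsto (fun k => D ^ k *ᵥ x) atTop (nhds 0) :=
    traj_zero hR hobs hP hfix _ fun k => by rw [mulVec_mulVec, ← hD, ← pow_succ']
  have hc : Continuous fun v : Fin n → ℝ => q P x + (q (Ps 0) v - q P v) := by
    unfold q; fun_prop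
  have hu := (hc.tendsto 0).comp hz
  have h0 : q P x + (q (Ps 0) 0 - q P 0) = q P x := by simp [q]
  rw [h0] at hu
  exact tendsto_of_tendsto_of_tendsto_of_le_of_le (q_tendsto hZlim x) hu
    (fun k => hlow k x) (fun k => hup k x)

lemma iter_psd {A : Matrix (Fin n) (Fin n) ℝ} {B : Matrix (Fin n) (Fin m) ℝ}
    {R : Matrix (Fin m) (Fin m) ℝ} {C : Matrix (Fin p) (Fin n) ℝ} (hR : R.PosDef)
    {Ps : ℕ → Matrix (Fin n) (Fin n) ℝ} (h0 : (Ps 0).PosSemidef)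
    (hs : ∀ k, Ps (k + 1) = ric A B R C (Ps k)) (k : ℕ) : (Ps k).PosSemidef := by
  induction k with
  | zero => exact h0
  | succ k ih => rw [hs]; exact ric_psd A B C hR ih

end RicAux


/-- Theorem 1 (Bertsekas): convergence of the Riccati iteration from any PSD
initial condition, and uniqueness of the PSD solution of the algebraic
Riccati equation, under controllability of (A,B) and observability of (A,C). -/
theorem riccati_iteration_converges (n m p : ℕ)
    (A : Matrix (Fin n) (Fin n) ℝ) (B : Matrix (Fin n) (Fin m) ℝ)
    (R : Matrix (Fin m) (Fin m) ℝ) (C : Matrix (Fin p) (Fin n) ℝ)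
    (hR : R.PosDef)
    (hctrb : (Matrix.of fun (i : Fin n) (q : Fin n × Fin m) =>
      (A ^ (q.1 : ℕ) * B) i q.2).rank = n)
    (hobs : (Matrix.of fun (q : Fin n × Fin p) (j : Fin n) =>
      (C * A ^ (q.1 : ℕ)) q.2 j).rank = n) :
    ∃ P : Matrix (Fin n) (Fin n) ℝ, P.PosDef ∧
      (∀ Pseq : ℕ → Matrix (Fin n) (Fin n) ℝ,
          (Pseq 0).PosSemidef →
          (∀ k, Pseq (k + 1) =
            Aᵀ * (Pseq k - Pseq k * B * (Bᵀ * Pseq k * B + R)⁻¹ * Bᵀ * Pseq k) * A + Cᵀ * C) →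
          Tendsto Pseq atTop (nhds P)) ∧
      P.PosSemidef ∧
      P = Aᵀ * (P - P * B * (Bᵀ * P * B + R)⁻¹ * Bᵀ * P) * A + Cᵀ * C ∧
      (∀ P' : Matrix (Fin n) (Fin n) ℝ, P'.PosSemidef →
        P' = Aᵀ * (P' - P' * B * (Bᵀ * P' * B + R)⁻¹ * Bᵀ * P') * A + Cᵀ * C → P' = P) := by
  let Zs : ℕ → Matrix (Fin n) (Fin n) ℝ := fun k => (RicAux.ric A B R C)^[k] 0
  have hZ0 : Zs 0 = 0 := rfl
  have hZ : ∀ k, Zs (k + 1) = RicAux.ric A B R C (Zs k) := fun k =>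
    Function.iterate_succ_apply' _ _ _
  have hZpsd := RicAux.iter_psd hR (hZ0 ▸ PosSemidef.zero) hZ
  obtain ⟨P, hP, hlim, hfix⟩ := RicAux.exists_fix hR hctrb hZpsd hZ0 hZ
  refine ⟨P, RicAux.fix_posDef hR hobs hP hfix, fun Ps h0 hs => ?_, hP, hfix, fun P' hP' hfix' => ?_⟩
  · exact RicAux.converges hR hobs hP hfix hZpsd hZ0 hZ hlim (RicAux.iter_psd hR h0 hs) hs
  · have := RicAux.converges hR hobs hP hfix hZpsd hZ0 hZ hlim (Ps := fun _ => P')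
      (fun _ => hP') (fun _ => hfix')
    exact tendsto_nhds_unique tendsto_const_nhds this
end

section
/- Let A ∈ ℝ^{n×n}, B ∈ ℝ^{n×m}, Q ∈ ℝ^{n×n} symmetric, γ > 0, μ ≥ 1, and let P ∈ ℝ^{n×n} be a symmetric positive semidefinite matrix satisfying P = Q + μ²AᵀPA − μ⁴AᵀPB(γI_m + μ²BᵀPB)⁻¹BᵀPA. Define H₁₂ = μ²AᵀPB, H₂₂ = γI_m + μ²BᵀPB, and K = H₂₂⁻¹H₁₂ᵀ. Then for every c ∈ ℝ and λ ∈ ℂ, letting M = μ·A − μcλ·BK (a complex n×n matrix) and s = 1 − 2c·Re λ + c²|λ|², the identity P − Mᴴ P M = Q − s·H₁₂H₂₂⁻¹H₁₂ᵀ + c²γ|λ|²·H₁₂H₂₂⁻²H₁₂ᵀ holds (all real matrices regarded as complex matrices entrywise). -/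
open Matrix

/-- The key algebraic identity in the proofs of Theorems 4 and 5:
`P − MᴴPM = Q − s·H₁₂H₂₂⁻¹H₁₂ᵀ + c²γ|λ|²·H₁₂H₂₂⁻²H₁₂ᵀ`
with `M = μA − μcλ·BK` and `s = 1 − 2c·Re λ + c²|λ|²`. -/
theorem lyapunov_qfunction_identity (n m : ℕ)
    (A : Matrix (Fin n) (Fin n) ℝ) (B : Matrix (Fin n) (Fin m) ℝ)
    (Q : Matrix (Fin n) (Fin n) ℝ) (hQ : Q.IsSymm)
    (γ μ : ℝ) (hγ : 0 < γ) (hμ : 1 ≤ μ)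
    (P : Matrix (Fin n) (Fin n) ℝ) (hP : P.PosSemidef)
    (hric : P = Q + μ ^ 2 • (Aᵀ * P * A) -
      μ ^ 4 • (Aᵀ * P * B *
        (γ • (1 : Matrix (Fin m) (Fin m) ℝ) + μ ^ 2 • (Bᵀ * P * B))⁻¹ * (Bᵀ * P * A)))
    (H₁₂ : Matrix (Fin n) (Fin m) ℝ) (hH₁₂ : H₁₂ = μ ^ 2 • (Aᵀ * P * B))
    (H₂₂ : Matrix (Fin m) (Fin m) ℝ)
    (hH₂₂ : H₂₂ = γ • (1 : Matrix (Fin m) (Fin m) ℝ) + μ ^ 2 • (Bᵀ * P * B))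
    (K : Matrix (Fin m) (Fin n) ℝ) (hK : K = H₂₂⁻¹ * H₁₂ᵀ)
    (c : ℝ) (lam : ℂ) :
    (P.map (Complex.ofReal ·)) -
      ((μ : ℂ) • A.map (Complex.ofReal ·) -
        ((μ : ℂ) * (c : ℂ) * lam) •
          (B.map (Complex.ofReal ·) * K.map (Complex.ofReal ·)))ᴴ *
        (P.map (Complex.ofReal ·)) *
      ((μ : ℂ) • A.map (Complex.ofReal ·) -
        ((μ : ℂ) * (c : ℂ) * lam) •
          (B.map (Complex.ofReal ·) * K.map (Complex.ofReal ·))) =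
    (Q.map (Complex.ofReal ·)) -
      ((1 - 2 * c * lam.re + c ^ 2 * ‖lam‖ ^ 2 : ℝ) : ℂ) •
        ((H₁₂ * H₂₂⁻¹ * H₁₂ᵀ).map (Complex.ofReal ·)) +
      ((c ^ 2 * γ * ‖lam‖ ^ 2 : ℝ) : ℂ) •
        ((H₁₂ * (H₂₂⁻¹) ^ 2 * H₁₂ᵀ).map (Complex.ofReal ·)) := by
  have hPs : Pᵀ = P := by
    have := hP.isHermitian.eq
    rwa [conjTranspose_eq_transpose_of_trivial] at this
  have hpd : H₂₂.PosDef := by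
    rw [hH₂₂]
    refine PosDef.add_posSemidef (PosDef.one.smul hγ) (PosSemidef.smul ?_ (by positivity))
    have := hP.conjTranspose_mul_mul_same B
    rwa [conjTranspose_eq_transpose_of_trivial] at this
  have hdet : IsUnit H₂₂.det := (isUnit_iff_isUnit_det _).1 hpd.isUnit
  have hHs : H₂₂ᵀ = H₂₂ := by
    have := hpd.isHermitian.eq
    rwa [conjTranspose_eq_transpose_of_trivial] at this
  have hHis : (H₂₂⁻¹)ᵀ = H₂₂⁻¹ := by rw [transpose_nonsing_inv, hHs]
  have hH12t : H₁₂ᵀ = μ ^ 2 • (Bᵀ * P * A) := by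
    rw [hH₁₂]; simp [transpose_mul, hPs, Matrix.mul_assoc]
  set S := H₁₂ * H₂₂⁻¹ * H₁₂ᵀ with hS
  set T := H₁₂ * (H₂₂⁻¹) ^ 2 * H₁₂ᵀ with hT
  have hKt : Kᵀ = H₁₂ * H₂₂⁻¹ := by
    rw [hK, transpose_mul, hHis, transpose_transpose]
  have h1 : μ ^ 2 • (Aᵀ * P * A) = P - Q + S := by
    have : S = μ ^ 4 • (Aᵀ * P * B * H₂₂⁻¹ * (Bᵀ * P * A)) := by
      rw [hS, hH12t, hH₁₂]
      simp only [Matrix.smul_mul, Matrix.mul_smul, smul_smul]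
      congr 1; ring
    rw [← hH₂₂, ← this] at hric
    have h := sub_eq_zero.2 hric
    rw [← sub_eq_zero, ← neg_eq_zero, ← h]; abel
  have h2 : μ ^ 2 • (Aᵀ * P * (B * K)) = S := by
    rw [hS, hK]; nth_rewrite 2 [hH₁₂]
    simp only [Matrix.smul_mul, Matrix.mul_assoc]
  have h3 : μ ^ 2 • ((B * K)ᵀ * P * A) = S := by
    rw [transpose_mul, hKt, hS, hH12t]
    simp only [Matrix.mul_smul, Matrix.mul_assoc]
  have h4 : μ ^ 2 • ((B * K)ᵀ * P * (B * K)) = S - γ • T := by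
    have e : μ ^ 2 • (Bᵀ * P * B) = H₂₂ - γ • (1 : Matrix (Fin m) (Fin m) ℝ) := by
      rw [hH₂₂]; abel
    have : μ ^ 2 • ((B * K)ᵀ * P * (B * K)) = Kᵀ * (μ ^ 2 • (Bᵀ * P * B)) * K := by
      rw [transpose_mul]
      simp only [Matrix.mul_smul, Matrix.smul_mul, Matrix.mul_assoc]
    rw [this, e, hKt, hK, hS, hT, Matrix.mul_sub, nonsing_inv_mul_cancel_right _ _ hdet, Matrix.sub_mul]
    simp only [Matrix.mul_smul, Matrix.smul_mul, Matrix.mul_assoc, Matrix.mul_one, pow_two]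
  have mm : ∀ {p q r : ℕ} (X : Matrix (Fin p) (Fin q) ℝ) (Y : Matrix (Fin q) (Fin r) ℝ),
      X.map (Complex.ofReal ·) * Y.map (Complex.ofReal ·) = (X * Y).map (Complex.ofReal ·) := by
    intro p q r X Y
    exact (Matrix.map_mul (f := Complex.ofRealHom)).symm
  have mt : ∀ {p q : ℕ} (X : Matrix (Fin p) (Fin q) ℝ),
      (X.map (Complex.ofReal ·))ᴴ = Xᵀ.map (Complex.ofReal ·) := by
    intro p q X; ext i j; simp
  rw [mm B K]
  generalize B * K = N at *
  simp only [conjTranspose_sub, conjTranspose_smul, mt, Matrix.sub_mul, Matrix.mul_sub,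
    Matrix.smul_mul, Matrix.mul_smul, mm]
  ext i j
  have g1 := congrArg (Complex.ofReal) (congrFun (congrFun h1 i) j)
  have g2 := congrArg (Complex.ofReal) (congrFun (congrFun h2 i) j)
  have g3 := congrArg (Complex.ofReal) (congrFun (congrFun h3 i) j)
  have g4 := congrArg (Complex.ofReal) (congrFun (congrFun h4 i) j)
  have r1 : lam + star lam = 2 * (lam.re : ℂ) := by
    have := Complex.add_conj lam
    simpa using this
  have r2 : lam * star lam = (‖lam‖ : ℂ) ^ 2 := Complex.mul_conj' lam
  simp only [Matrix.smul_apply, Matrix.sub_apply, Matrix.add_apply, smul_eq_mul,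
    Complex.ofReal_mul, Complex.ofReal_sub, Complex.ofReal_add, Complex.ofReal_pow] at g1 g2 g3 g4
  have sr : ∀ x : ℝ, star (x : ℂ) = x := Complex.conj_ofReal
  simp only [Matrix.smul_apply, Matrix.sub_apply, Matrix.add_apply, smul_eq_mul, Matrix.map_apply,
    star_mul', sr]
  push_cast
  rw [← r2]
  linear_combination (-1 : ℂ) * g1 + (c * lam) * g2 + (c * star lam) * g3
    - c ^ 2 * (lam * star lam) * g4 + c * (S i j : ℂ) * r1
end

section
/- Let A ∈ ℝ^{n×n}, B ∈ ℝ^{n×m}, Q ∈ ℝ^{n×n} symmetric, γ > 0, μ ≥ 1, and let P ∈ ℝ^{n×n} be a symmetric positive semidefinite matrix satisfying P = Q + μ²AᵀPA − μ⁴AᵀPB(γI_m + μ²BᵀPB)⁻¹BᵀPA. Define H₁₂ = μ²AᵀPB, H₂₂ = γI_m + μ²BᵀPB, and K = H₂₂⁻¹H₁₂ᵀ. Let c ∈ ℝ, λ ∈ ℂ, β ∈ ℝ, and suppose 1 − 2c·Re λ + c²|λ|² ≤ β². Then, with M = μ·A − μcλ·BK (a complex n×n matrix), the Hermitian matrix P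 − Mᴴ P M − (Q − β²·H₁₂H₂₂⁻¹H₁₂ᵀ) is positive semidefinite (all real matrices regarded as complex matrices entrywise). -/
open Matrix ComplexOrder

open scoped MatrixOrder in
lemma aux_map_psd {n : ℕ} {X : Matrix (Fin n) (Fin n) ℝ} (h : X.PosSemidef) :
    (X.map (Complex.ofReal ·)).PosSemidef := by
  obtain ⟨C, rfl⟩ := CStarAlgebra.nonneg_iff_eq_star_mul_self.mp h.nonneg
  have : (star C * C).map (Complex.ofReal ·)
      = (C.map (Complex.ofReal ·))ᴴ * (C.map (Complex.ofReal ·)) := by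
    ext i j
    simp [Matrix.mul_apply, Matrix.star_apply]
  rw [this]
  exact Matrix.posSemidef_conjTranspose_mul_self _

lemma aux_map_mul {a b d : ℕ} (X : Matrix (Fin a) (Fin b) ℝ) (Y : Matrix (Fin b) (Fin d) ℝ) :
    X.map (Complex.ofReal ·) * Y.map (Complex.ofReal ·) = (X * Y).map (Complex.ofReal ·) := by
  ext i j
  simp [Matrix.mul_apply]

lemma aux_map_ct {a b : ℕ} (X : Matrix (Fin a) (Fin b) ℝ) :
    (X.map (Complex.ofReal ·))ᴴ = Xᵀ.map (Complex.ofReal ·) := by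
  ext i j
  simp

/-- The Lyapunov-type bound from the proof of Theorem 4: if
`1 − 2c·Re λ + c²|λ|² ≤ β²` then `P − MᴴPM ⪰ Q − β²·H₁₂H₂₂⁻¹H₁₂ᵀ`
with `M = μA − μcλ·BK`. -/
theorem lyapunov_qfunction_bound (n m : ℕ)
    (A : Matrix (Fin n) (Fin n) ℝ) (B : Matrix (Fin n) (Fin m) ℝ)
    (Q : Matrix (Fin n) (Fin n) ℝ) (hQ : Q.IsSymm)
    (γ μ : ℝ) (hγ : 0 < γ) (hμ : 1 ≤ μ)
    (P : Matrix (Fin n) (Fin n) ℝ) (hP : P.PosSemidef)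
    (hric : P = Q + μ ^ 2 • (Aᵀ * P * A) -
      μ ^ 4 • (Aᵀ * P * B *
        (γ • (1 : Matrix (Fin m) (Fin m) ℝ) + μ ^ 2 • (Bᵀ * P * B))⁻¹ * (Bᵀ * P * A)))
    (H₁₂ : Matrix (Fin n) (Fin m) ℝ) (hH₁₂ : H₁₂ = μ ^ 2 • (Aᵀ * P * B))
    (H₂₂ : Matrix (Fin m) (Fin m) ℝ)
    (hH₂₂ : H₂₂ = γ • (1 : Matrix (Fin m) (Fin m) ℝ) + μ ^ 2 • (Bᵀ * P * B))
    (K : Matrix (Fin m) (Fin n) ℝ) (hK : K = H₂₂⁻¹ * H₁₂ᵀ)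
    (c : ℝ) (lam : ℂ) (β : ℝ)
    (hβ : 1 - 2 * c * lam.re + c ^ 2 * ‖lam‖ ^ 2 ≤ β ^ 2) :
    ((P.map (Complex.ofReal ·)) -
      ((μ : ℂ) • A.map (Complex.ofReal ·) -
        ((μ : ℂ) * (c : ℂ) * lam) •
          (B.map (Complex.ofReal ·) * K.map (Complex.ofReal ·)))ᴴ *
        (P.map (Complex.ofReal ·)) *
      ((μ : ℂ) • A.map (Complex.ofReal ·) -
        ((μ : ℂ) * (c : ℂ) * lam) •
          (B.map (Complex.ofReal ·) * K.map (Complex.ofReal ·))) -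
      ((Q - β ^ 2 • (H₁₂ * H₂₂⁻¹ * H₁₂ᵀ)).map (Complex.ofReal ·))).PosSemidef := by
  have hPt : Pᵀ = P := by
    have := hP.1
    rwa [Matrix.IsHermitian, Matrix.conjTranspose_eq_transpose_of_trivial] at this
  have hH : H₂₂.PosDef := by
    rw [hH₂₂]
    refine Matrix.PosDef.add_posSemidef (Matrix.PosDef.one.smul hγ) ?_
    have := hP.conjTranspose_mul_mul_same B
    rw [Matrix.conjTranspose_eq_transpose_of_trivial] at this
    exact this.smul (sq_nonneg μ)
  have hu : IsUnit H₂₂.det := (Matrix.isUnit_iff_isUnit_det _).1 hH.isUnit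
  have hHt : H₂₂ᵀ = H₂₂ := by
    have := hH.1
    rwa [Matrix.IsHermitian, Matrix.conjTranspose_eq_transpose_of_trivial] at this
  obtain ⟨S, hS⟩ : ∃ S, S = H₁₂ * H₂₂⁻¹ * H₁₂ᵀ := ⟨_, rfl⟩
  have hKt : Kᵀ = H₁₂ * H₂₂⁻¹ := by
    rw [hK, Matrix.transpose_mul, Matrix.transpose_transpose, Matrix.transpose_nonsing_inv, hHt]
  have hH12t : H₁₂ᵀ = μ ^ 2 • (Bᵀ * P * A) := by
    rw [hH₁₂]
    simp [Matrix.transpose_mul, hPt, Matrix.mul_assoc]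
  have e1 : μ ^ 2 • (Aᵀ * P * (B * K)) = S := by
    rw [hS, hK, ← Matrix.mul_assoc, ← Matrix.smul_mul, ← hH₁₂, Matrix.mul_assoc]
  have e2 : μ ^ 2 • ((B * K)ᵀ * P * A) = S := by
    rw [hS, ← hKt, hH12t, Matrix.mul_smul, Matrix.transpose_mul]
    simp only [Matrix.mul_assoc]
  have e0 : Kᵀ * H₂₂ * K = S := by
    rw [hKt, Matrix.nonsing_inv_mul_cancel_right _ _ hu, hK, hS, Matrix.mul_assoc]
  have e3 : μ ^ 2 • ((B * K)ᵀ * P * (B * K)) = S - γ • (Kᵀ * K) := by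
    rw [← e0, hH₂₂, Matrix.transpose_mul]
    simp [Matrix.mul_add, Matrix.add_mul, Matrix.mul_assoc]
  have e4 : P = Q + μ ^ 2 • (Aᵀ * P * A) - S := by
    rw [hS, hH12t, hH₁₂]
    conv_lhs => rw [hric]
    rw [← hH₂₂]
    simp only [Matrix.smul_mul, Matrix.mul_smul, smul_smul]
    congr 2
    ring
  have hSp : S.PosSemidef := by
    rw [← e0]
    simpa using hH.posSemidef.conjTranspose_mul_mul_same K
  have hKp : (Kᵀ * K).PosSemidef := by
    simpa using Matrix.posSemidef_conjTranspose_mul_self K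
  have hn : ‖lam‖ ^ 2 = lam.re ^ 2 + lam.im ^ 2 := by
    rw [Complex.sq_norm, Complex.normSq_apply]; ring
  have key := aux_map_psd ((hSp.smul (sub_nonneg.2 hβ)).add
    (hKp.smul (show 0 ≤ c ^ 2 * ‖lam‖ ^ 2 * γ by positivity)))
  convert key using 1
  rw [← hS]
  simp only [aux_map_mul, Matrix.conjTranspose_sub, Matrix.conjTranspose_smul, aux_map_ct,
    Matrix.sub_mul, Matrix.mul_sub, Matrix.smul_mul, Matrix.mul_smul]
  ext i j
  have f1 := congrFun (congrFun e1 i) j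
  have f2 := congrFun (congrFun e2 i) j
  have f3 := congrFun (congrFun e3 i) j
  have f4 := congrFun (congrFun e4 i) j
  simp only [Matrix.smul_apply, Matrix.sub_apply, Matrix.add_apply, Matrix.map_apply,
    smul_eq_mul] at f1 f2 f3 f4 ⊢
  generalize (Aᵀ * P * (B * K)) i j = x1 at *
  generalize ((B * K)ᵀ * P * A) i j = x2 at *
  generalize ((B * K)ᵀ * P * (B * K)) i j = x3 at *
  generalize (Aᵀ * P * A) i j = x4 at *
  generalize (Kᵀ * K) i j = x5 at *
  rw [hn, f4]
  apply Complex.ext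
  · simp [pow_two]
    linear_combination (c * lam.re) * f1 + (c * lam.re) * f2 - c^2 * (lam.re^2+lam.im^2) * f3
  · simp [pow_two]
    linear_combination (c * lam.im) * f1 - (c * lam.im) * f2
end

section
/- Let A ∈ ℝ^{n×n}, B ∈ ℝ^{n×m}, Q ∈ ℝ^{n×n} symmetric, γ > 0, μ ≥ 1, and let P ∈ ℝ^{n×n} be a symmetric positive definite matrix satisfying P = Q + μ²AᵀPA − μ⁴AᵀPB(γI_m + μ²BᵀPB)⁻¹BᵀPA. Define H₁₂ = μ²AᵀPB, H₂₂ = γI_m + μ²BᵀPB, and K = H₂₂⁻¹H₁₂ᵀ. Let c ∈ ℝ, λ ∈ ℂ, β ∈ ℝ, and suppose that Q − β²·H₁₂H₂₂⁻¹H₁₂ᵀ is positive definite and that 1 − 2c·Re λ + c²|λ|² ≤ β². Then the complex matrix A − cλ·BK has spectral radius strictly less than 1/μ. -/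
open Matrix Polynomial

open scoped ComplexOrder MatrixOrder Matrix.Norms.L2Operator

theorem posSemidef_map_aux {n : ℕ} {N : Matrix (Fin n) (Fin n) ℝ} (h : N.PosSemidef) :
    (N.map (Complex.ofRealHom)).PosSemidef := by
  obtain ⟨C, rfl⟩ := CStarAlgebra.nonneg_iff_eq_star_mul_self.mp h.nonneg
  rw [Matrix.star_eq_conjTranspose, Matrix.map_mul]
  have : (Cᴴ).map Complex.ofRealHom = (C.map Complex.ofRealHom)ᴴ := by
    ext i j; simp
  rw [this]
  exact Matrix.posSemidef_conjTranspose_mul_self _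

theorem posDef_map_aux {n : ℕ} {N : Matrix (Fin n) (Fin n) ℝ} (h : N.PosDef) :
    (N.map (Complex.ofRealHom)).PosDef := by
  refine (posSemidef_map_aux h.posSemidef).posDef_iff_isUnit.2 ?_
  exact h.isUnit.map (Complex.ofRealHom.mapMatrix)

theorem map_smul_aux {n m : ℕ} (r : ℝ) (N : Matrix (Fin n) (Fin m) ℝ) :
    (r • N).map Complex.ofRealHom = (r : ℂ) • N.map Complex.ofRealHom := by
  ext i j; simp

theorem map_tr_aux {n m : ℕ} (N : Matrix (Fin n) (Fin m) ℝ) :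
    (Nᵀ).map Complex.ofRealHom = (N.map Complex.ofRealHom)ᴴ := by
  ext i j; simp

/-- Spectral-radius conclusion from the proof of Theorem 4: if
`Q − β²·H₁₂H₂₂⁻¹H₁₂ᵀ ≻ 0` and `1 − 2c·Re λ + c²|λ|² ≤ β²`, then the spectral
radius of `A − cλ·BK` is strictly less than `1/μ`. -/
theorem spectral_radius_lt_inv_mu (n m : ℕ)
    (A : Matrix (Fin n) (Fin n) ℝ) (B : Matrix (Fin n) (Fin m) ℝ)
    (Q : Matrix (Fin n) (Fin n) ℝ) (hQ : Q.IsSymm)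
    (γ μ : ℝ) (hγ : 0 < γ) (hμ : 1 ≤ μ)
    (P : Matrix (Fin n) (Fin n) ℝ) (hP : P.PosDef)
    (hric : P = Q + μ ^ 2 • (Aᵀ * P * A) -
      μ ^ 4 • (Aᵀ * P * B *
        (γ • (1 : Matrix (Fin m) (Fin m) ℝ) + μ ^ 2 • (Bᵀ * P * B))⁻¹ * (Bᵀ * P * A)))
    (H₁₂ : Matrix (Fin n) (Fin m) ℝ) (hH₁₂ : H₁₂ = μ ^ 2 • (Aᵀ * P * B))
    (H₂₂ : Matrix (Fin m) (Fin m) ℝ)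
    (hH₂₂ : H₂₂ = γ • (1 : Matrix (Fin m) (Fin m) ℝ) + μ ^ 2 • (Bᵀ * P * B))
    (K : Matrix (Fin m) (Fin n) ℝ) (hK : K = H₂₂⁻¹ * H₁₂ᵀ)
    (c : ℝ) (lam : ℂ) (β : ℝ)
    (hpos : (Q - β ^ 2 • (H₁₂ * H₂₂⁻¹ * H₁₂ᵀ)).PosDef)
    (hβ : 1 - 2 * c * lam.re + c ^ 2 * ‖lam‖ ^ 2 ≤ β ^ 2) :
    ∀ z : ℂ,
      ((A.map (Complex.ofReal ·) - ((c : ℂ) * lam) •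
          (B.map (Complex.ofReal ·) * K.map (Complex.ofReal ·))).charpoly).IsRoot z →
      ‖z‖ < 1 / μ := by
  intro z hz
  have hHpd : H₂₂.PosDef := by
    rw [hH₂₂]
    refine Matrix.PosDef.add_posSemidef (Matrix.PosDef.one.smul hγ) ?_
    refine Matrix.PosSemidef.smul ?_ (by positivity)
    simpa using hP.posSemidef.conjTranspose_mul_mul_same B
  have hHs : H₂₂ᵀ = H₂₂ := by simpa using hHpd.isHermitian.eq
  have hPs : Pᵀ = P := by simpa using hP.isHermitian.eq
  have hHdet : IsUnit H₂₂.det := (Matrix.isUnit_iff_isUnit_det _).1 hHpd.isUnit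
  have hKt : Kᵀ = H₁₂ * H₂₂⁻¹ := by
    rw [hK, Matrix.transpose_mul, Matrix.transpose_transpose, Matrix.transpose_nonsing_inv, hHs]
  obtain ⟨W, hW⟩ : ∃ W, W = H₁₂ * H₂₂⁻¹ * H₁₂ᵀ := ⟨_, rfl⟩
  have hH12t : H₁₂ᵀ = μ ^ 2 • (Bᵀ * P * A) := by
    rw [hH₁₂]; simp [Matrix.transpose_mul, hPs, Matrix.mul_assoc]
  have e1 : μ ^ 2 • (Aᵀ * P * B * K) = W := by
    rw [hW, hK, ← Matrix.mul_assoc]; simp [hH₁₂, Matrix.mul_assoc]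
  have e2 : μ ^ 2 • (Kᵀ * Bᵀ * P * A) = W := by
    rw [hW, ← hKt, hH12t]; simp [Matrix.mul_assoc]
  have e3 : γ • (Kᵀ * K) + μ ^ 2 • (Kᵀ * Bᵀ * P * B * K) = W := by
    have : Kᵀ * H₂₂ * K = W := by
      rw [hKt, Matrix.nonsing_inv_mul_cancel_right _ _ hHdet, hW, hK, Matrix.mul_assoc]
    rw [← this, hH₂₂]
    simp [Matrix.mul_add, Matrix.add_mul, Matrix.mul_assoc]
  have e4 : P = Q + μ ^ 2 • (Aᵀ * P * A) - W := by
    have : W = μ ^ 4 • (Aᵀ * P * B * H₂₂⁻¹ * (Bᵀ * P * A)) := by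
      rw [hW, hH12t, hH₁₂]
      simp only [Matrix.smul_mul, Matrix.mul_smul, smul_smul]
      congr 1; ring
    rw [this, hH₂₂]; exact hric
  have hWp : W.PosSemidef := by
    rw [hW]
    simpa using hHpd.inv.posSemidef.mul_mul_conjTranspose_same H₁₂
  rw [← hW] at hpos
  have c0 := posDef_map_aux hpos
  have cP := posDef_map_aux hP
  have cW := posSemidef_map_aux hWp
  have c1 := congrArg (fun X => X.map Complex.ofRealHom) e1
  have c2 := congrArg (fun X => X.map Complex.ofRealHom) e2
  have c3 := congrArg (fun X => X.map Complex.ofRealHom) e3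
  have c4 := congrArg (fun X => X.map Complex.ofRealHom) e4
  simp only [Matrix.map_mul, map_smul_aux, map_tr_aux, Matrix.map_add _ (map_add Complex.ofRealHom),
    Matrix.map_sub _ (map_sub Complex.ofRealHom)] at c0 c1 c2 c3 c4
  have ea : A.map (Complex.ofReal ·) = A.map Complex.ofRealHom := rfl
  have eb : B.map (Complex.ofReal ·) = B.map Complex.ofRealHom := rfl
  have ek : K.map (Complex.ofReal ·) = K.map Complex.ofRealHom := rfl
  rw [ea, eb, ek] at hz
  clear ea eb ek e1 e2 e3 e4
  generalize A.map Complex.ofRealHom = A' at *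
  generalize B.map Complex.ofRealHom = B' at *
  generalize K.map Complex.ofRealHom = K' at *
  generalize P.map Complex.ofRealHom = P' at *
  generalize Q.map Complex.ofRealHom = Q' at *
  generalize W.map Complex.ofRealHom = W' at *
  obtain ⟨s, hs⟩ : ∃ s : ℂ, s = (c : ℂ) * lam := ⟨_, rfl⟩
  rw [← hs] at hz
  obtain ⟨M, hM⟩ : ∃ M, M = A' - s • (B' * K') := ⟨_, rfl⟩
  rw [← hM] at hz
  have hsβ : 0 ≤ β ^ 2 - 1 + 2 * s.re - Complex.normSq s := by
    have h1 : s.re = c * lam.re := by rw [hs]; simp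
    have h2 : Complex.normSq s = c ^ 2 * ‖lam‖ ^ 2 := by
      rw [hs, Complex.normSq_eq_norm_sq]; simp [mul_pow]
    rw [h1, h2]; linarith
  have key : P' - ((μ ^ 2 : ℝ) : ℂ) • (Mᴴ * P' * M) =
      (Q' - ((β ^ 2 : ℝ) : ℂ) • W') +
        (((β ^ 2 - 1 + 2 * s.re - Complex.normSq s : ℝ) : ℂ) • W'
        + ((γ * Complex.normSq s : ℝ) : ℂ) • (K'ᴴ * K')) := by
    have hex : ((μ ^ 2 : ℝ) : ℂ) • (Mᴴ * P' * M) =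
        ((μ ^ 2 : ℝ) : ℂ) • (A'ᴴ * P' * A') - s • (((μ ^ 2 : ℝ) : ℂ) • (A'ᴴ * P' * B' * K'))
        - star s • (((μ ^ 2 : ℝ) : ℂ) • (K'ᴴ * B'ᴴ * P' * A'))
        + (star s * s) • (((μ ^ 2 : ℝ) : ℂ) • (K'ᴴ * B'ᴴ * P' * B' * K')) := by
      rw [hM]
      simp only [Matrix.conjTranspose_sub, Matrix.conjTranspose_smul, Matrix.conjTranspose_mul,
        Matrix.sub_mul, Matrix.mul_sub, Matrix.smul_mul, Matrix.mul_smul, Matrix.mul_assoc]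
      module
    have c3' := eq_sub_of_add_eq' c3
    have c4' : ((μ ^ 2 : ℝ) : ℂ) • (A'ᴴ * P' * A') = P' - Q' + W' := by
      nth_rewrite 2 [c4]; abel
    have hre : (2 : ℂ) * ((s.re : ℝ) : ℂ) = s + star s := by
      rw [Complex.star_def, Complex.add_conj]; push_cast; ring
    have hns : ((Complex.normSq s : ℝ) : ℂ) = star s * s := by
      rw [Complex.star_def, Complex.normSq_eq_conj_mul_self]
    rw [hex, c1, c2, c3', c4']
    push_cast
    rw [hre, hns]
    module
  have hD : (P' - ((μ ^ 2 : ℝ) : ℂ) • (Mᴴ * P' * M)).PosDef := by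
    rw [key]
    refine c0.add_posSemidef (Matrix.PosSemidef.add ?_ ?_)
    · exact cW.smul (by exact_mod_cast hsβ)
    · refine (Matrix.posSemidef_conjTranspose_mul_self K').smul ?_
      have : 0 ≤ γ * Complex.normSq s := mul_nonneg hγ.le (Complex.normSq_nonneg _)
      exact_mod_cast this
  obtain ⟨v, hv0, hv⟩ : ∃ v, v ≠ 0 ∧ M *ᵥ v = z • v := by
    rw [Polynomial.IsRoot, Matrix.eval_charpoly] at hz
    obtain ⟨v, hv0, hv⟩ := Matrix.exists_mulVec_eq_zero_iff.2 hz
    refine ⟨v, hv0, ?_⟩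
    rw [Matrix.sub_mulVec, sub_eq_zero] at hv
    rw [← hv]; simp
  have d1 := hD.dotProduct_mulVec_pos hv0
  have d2 := cP.dotProduct_mulVec_pos hv0
  have d3 : star v ⬝ᵥ ((P' - ((μ ^ 2 : ℝ) : ℂ) • (Mᴴ * P' * M)) *ᵥ v) =
      ((1 - μ ^ 2 * ‖z‖ ^ 2 : ℝ) : ℂ) * (star v ⬝ᵥ (P' *ᵥ v)) := by
    have : star v ⬝ᵥ ((Mᴴ * P' * M) *ᵥ v) = (star z * z) * (star v ⬝ᵥ (P' *ᵥ v)) := by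
      rw [← Matrix.mulVec_mulVec, hv, ← Matrix.mulVec_mulVec, Matrix.dotProduct_mulVec,
        ← Matrix.star_mulVec, hv, Matrix.mulVec_smul, star_smul, smul_dotProduct, dotProduct_smul]
      simp only [smul_eq_mul]; ring
    rw [Matrix.sub_mulVec, dotProduct_sub, Matrix.smul_mulVec, dotProduct_smul, this,
      ← Complex.normSq_eq_norm_sq]
    push_cast
    rw [Complex.normSq_eq_conj_mul_self, Complex.star_def, smul_eq_mul]
    ring
  rw [d3] at d1
  have d4 : 0 < 1 - μ ^ 2 * ‖z‖ ^ 2 := by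
    have r1 := (Complex.pos_iff.1 d1).1
    have r2 := (Complex.pos_iff.1 d2).1
    rw [Complex.re_ofReal_mul] at r1
    exact pos_of_mul_pos_left r1 r2.le
  rw [lt_div_iff₀ (by linarith)]
  have hz0 := norm_nonneg z
  nlinarith [mul_nonneg hz0 (by linarith : (0:ℝ) ≤ μ)]
end

section
/- Let M be a complex n×n matrix and P a complex Hermitian positive definite n×n matrix such that P − Mᴴ P M is positive definite. Then the spectral radius of M is strictly less than 1, i.e., every eigenvalue z ∈ ℂ of M satisfies |z| < 1. -/
open Matrix Polynomial ComplexOrder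

/-- Discrete-time Lyapunov stability: if `P ≻ 0` is Hermitian and
`P − MᴴPM ≻ 0`, then every eigenvalue of `M` has modulus `< 1`. -/
theorem lyapunov_schur_stability (n : ℕ)
    (M P : Matrix (Fin n) (Fin n) ℂ) (hP : P.PosDef)
    (hLyap : (P - Mᴴ * P * M).PosDef) :
    ∀ z : ℂ, (M.charpoly).IsRoot z → ‖z‖ < 1 := by
  intro z hz
  rw [Polynomial.IsRoot, Matrix.eval_charpoly] at hz
  obtain ⟨v, hv, hMv⟩ := Matrix.exists_mulVec_eq_zero_iff.mpr hz
  have hM : M *ᵥ v = z • v := by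
    rw [Matrix.sub_mulVec, sub_eq_zero] at hMv
    rw [← hMv]
    ext i
    simp [Matrix.scalar_apply, Matrix.mulVec_diagonal]
  have h1 := hP.dotProduct_mulVec_pos hv
  have h2 := hLyap.dotProduct_mulVec_pos hv
  have h3 : star v ⬝ᵥ ((P - Mᴴ * P * M) *ᵥ v)
      = ((1 - ‖z‖ ^ 2 : ℝ) : ℂ) * (star v ⬝ᵥ (P *ᵥ v)) := by
    have h4 : star v ⬝ᵥ ((Mᴴ * P * M) *ᵥ v) = (star z * z) * (star v ⬝ᵥ (P *ᵥ v)) := by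
      rw [← Matrix.mulVec_mulVec, ← Matrix.mulVec_mulVec, Matrix.dotProduct_mulVec,
        ← Matrix.star_mulVec, hM, Matrix.mulVec_smul, star_smul, smul_dotProduct,
        dotProduct_smul, smul_eq_mul, smul_eq_mul, mul_assoc]
    have h5 : star z * z = ((‖z‖ ^ 2 : ℝ) : ℂ) := by
      have := Complex.conj_mul' z
      push_cast
      exact this
    rw [Matrix.sub_mulVec, dotProduct_sub, h4, h5]
    push_cast
    ring
  rw [h3] at h2
  have h6 := (Complex.lt_def.mp h1).1
  have h7 := (Complex.lt_def.mp h2).1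
  rw [Complex.re_ofReal_mul] at h7
  simp only [Complex.zero_re] at h6 h7
  have h8 := pos_of_mul_pos_left h7 h6.le
  nlinarith [norm_nonneg z]
end

section
/- Let A ∈ ℝ^{n×n}, B ∈ ℝ^{n×m}, Q ∈ ℝ^{n×n} symmetric positive semidefinite, γ > 0, μ ≥ 1, and let H be a symmetric (n+m)×(n+m) real matrix with blocks H₁₁ ∈ ℝ^{n×n}, H₁₂ ∈ ℝ^{n×m}, H₂₂ ∈ ℝ^{m×m}, where H₂₂ is positive definite. Let G = [A B] denote the n×(n+m) matrix formed by placing A and B side by side, let Λ be the block-diagonal (n+m)×(n+m) matrix with blocks Q and γI_m, let D be a real (n+m)×l matrix with rank(D) = n+m, and set X = GD. Then the block matrix [[ μ²GᵀH₁₁G − H + Λ, μGᵀH₁₂ ],[ μH₁₂ᵀG, H₂₂ ]] is positive semidefinite if and only if the block matrix [[ μ²XᵀH₁₁X − Dᵀ(H − Λ)D, μXᵀH₁₂ ],[ μH₁₂ᵀX, H₂₂ ]] is positive semidefinite. -/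
open Matrix

/-- Theorem 6 (equivalence of model-based and data-driven LMIs): with `G = [A B]`,
`Λ = diag(Q, γI)`, `D` of full row rank and `X = GD`, the model-based block LMI
is positive semidefinite iff the data-based block LMI is. -/
theorem model_based_iff_data_driven_lmi (n m l : ℕ)
    (A : Matrix (Fin n) (Fin n) ℝ) (B : Matrix (Fin n) (Fin m) ℝ)
    (Q : Matrix (Fin n) (Fin n) ℝ) (hQ : Q.PosSemidef)
    (γ μ : ℝ) (hγ : 0 < γ) (hμ : 1 ≤ μ)
    (H₁₁ : Matrix (Fin n) (Fin n) ℝ) (hH₁₁ : H₁₁.IsSymm)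
    (H₁₂ : Matrix (Fin n) (Fin m) ℝ)
    (H₂₂ : Matrix (Fin m) (Fin m) ℝ) (hH₂₂ : H₂₂.PosDef)
    (D : Matrix (Fin n ⊕ Fin m) (Fin l) ℝ) (hD : D.rank = n + m) :
    (Matrix.fromBlocks
        (μ ^ 2 • ((Matrix.fromCols A B)ᵀ * H₁₁ * Matrix.fromCols A B) -
          Matrix.fromBlocks H₁₁ H₁₂ H₁₂ᵀ H₂₂ +
          Matrix.fromBlocks Q 0 0 (γ • (1 : Matrix (Fin m) (Fin m) ℝ)))
        (μ • ((Matrix.fromCols A B)ᵀ * H₁₂))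
        (μ • (H₁₂ᵀ * Matrix.fromCols A B)) H₂₂).PosSemidef ↔
      (Matrix.fromBlocks
        (μ ^ 2 • ((Matrix.fromCols A B * D)ᵀ * H₁₁ * (Matrix.fromCols A B * D)) -
          Dᵀ * (Matrix.fromBlocks H₁₁ H₁₂ H₁₂ᵀ H₂₂ -
            Matrix.fromBlocks Q 0 0 (γ • (1 : Matrix (Fin m) (Fin m) ℝ))) * D)
        (μ • ((Matrix.fromCols A B * D)ᵀ * H₁₂))
        (μ • (H₁₂ᵀ * (Matrix.fromCols A B * D))) H₂₂).PosSemidef := by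
  obtain ⟨E, hE⟩ : ∃ E : Matrix (Fin l) (Fin n ⊕ Fin m) ℝ, D * E = 1 := by
    rw [← Matrix.mulVec_surjective_iff_exists_right_inverse]
    have h : LinearMap.range D.mulVecLin = ⊤ := by
      apply Submodule.eq_top_of_finrank_eq
      have h2 : Module.finrank ℝ (LinearMap.range D.mulVecLin) = n + m := hD
      rw [h2]
      simp
    exact LinearMap.range_eq_top.mp h
  set G := Matrix.fromCols A B
  set H := Matrix.fromBlocks H₁₁ H₁₂ H₁₂ᵀ H₂₂
  set L := Matrix.fromBlocks Q 0 0 (γ • (1 : Matrix (Fin m) (Fin m) ℝ))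
  set M := Matrix.fromBlocks (μ ^ 2 • (Gᵀ * H₁₁ * G) - H + L) (μ • (Gᵀ * H₁₂))
    (μ • (H₁₂ᵀ * G)) H₂₂ with hM
  let T : Matrix ((Fin n ⊕ Fin m) ⊕ Fin m) (Fin l ⊕ Fin m) ℝ := Matrix.fromBlocks D 0 0 1
  let S : Matrix (Fin l ⊕ Fin m) ((Fin n ⊕ Fin m) ⊕ Fin m) ℝ := Matrix.fromBlocks E 0 0 1
  have hTS : T * S = 1 := by
    simp [T, S, Matrix.fromBlocks_multiply, hE]
  have key : Matrix.fromBlocks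
        (μ ^ 2 • ((G * D)ᵀ * H₁₁ * (G * D)) - Dᵀ * (H - L) * D)
        (μ • ((G * D)ᵀ * H₁₂)) (μ • (H₁₂ᵀ * (G * D))) H₂₂ = Tᴴ * M * T := by
    simp only [T, hM, Matrix.conjTranspose_eq_transpose_of_trivial, Matrix.fromBlocks_transpose,
      Matrix.fromBlocks_multiply, Matrix.transpose_zero, Matrix.transpose_one]
    simp [Matrix.mul_assoc, Matrix.mul_add, Matrix.mul_sub, Matrix.add_mul, Matrix.sub_mul]
    abel
  rw [key]
  constructor
  · intro h
    exact h.conjTranspose_mul_mul_same T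
  · intro h
    have h3 := h.conjTranspose_mul_mul_same S
    have h4 : Sᴴ * (Tᴴ * M * T) * S = M := by
      calc Sᴴ * (Tᴴ * M * T) * S = (T * S)ᴴ * M * (T * S) := by
            simp only [Matrix.conjTranspose_mul, Matrix.mul_assoc]
        _ = M := by rw [hTS]; simp
    rwa [h4] at h3
end

section
/- Let A ∈ ℝ^{n×n}, B ∈ ℝ^{n×m}, Q ∈ ℝ^{n×n} symmetric. For γ > 0 and a symmetric positive semidefinite matrix P ∈ ℝ^{n×n}, define the Riccati operator R_γ(P) = AᵀPA − AᵀPB(γI_m + BᵀPB)⁻¹BᵀPA + Q. If 0 < γ₁ ≤ γ₂ and P₁, P₂ are symmetric positive semidefinite with P₁ ⪯ P₂, then R_{γ₁}(P₁) ⪯ R_{γ₂}(P₂). -/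
open Matrix

lemma riccati_aux {n m : ℕ}
    (A : Matrix (Fin n) (Fin n) ℝ) (B : Matrix (Fin n) (Fin m) ℝ)
    (γ : ℝ) (P : Matrix (Fin n) (Fin n) ℝ) (hP : Pᵀ = P)
    (S T : Matrix (Fin m) (Fin m) ℝ) (hS : S = γ • (1 : Matrix (Fin m) (Fin m) ℝ) + Bᵀ * P * B)
    (hST : S * T = 1) (hTS : T * S = 1) (hT : Tᵀ = T) (K : Matrix (Fin m) (Fin n) ℝ) :
    Aᵀ * P * A - Aᵀ * P * B * T * Bᵀ * P * A =
      (A - B * K)ᵀ * P * (A - B * K) + γ • (Kᵀ * K)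
        - (K - T * (Bᵀ * P * A))ᵀ * S * (K - T * (Bᵀ * P * A)) := by
  have e1 : S * (T * (Bᵀ * P * A)) = Bᵀ * P * A := by
    rw [← Matrix.mul_assoc, hST, Matrix.one_mul]
  have e2 : (T * (Bᵀ * P * A))ᵀ = Aᵀ * P * B * T := by
    simp only [transpose_mul, hP, hT, transpose_transpose, Matrix.mul_assoc]
  have e3 : Aᵀ * P * B * T * S = Aᵀ * P * B := by
    rw [Matrix.mul_assoc _ T S, hTS, Matrix.mul_one]
  have e4 : Kᵀ * S * K = γ • (Kᵀ * K) + Kᵀ * Bᵀ * P * B * K := by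
    rw [hS]
    simp only [Matrix.mul_add, Matrix.add_mul, Matrix.mul_smul, Matrix.smul_mul, Matrix.mul_one,
      Matrix.mul_assoc]
  have e5 : (K - T * (Bᵀ * P * A))ᵀ * S * (K - T * (Bᵀ * P * A)) =
      γ • (Kᵀ * K) + Kᵀ * Bᵀ * P * B * K - Kᵀ * (Bᵀ * P * A) - Aᵀ * P * B * K
        + Aᵀ * P * B * (T * (Bᵀ * P * A)) := by
    rw [transpose_sub, e2, Matrix.sub_mul, e3, Matrix.mul_sub, Matrix.sub_mul, Matrix.sub_mul, e4,
      Matrix.mul_assoc Kᵀ S, e1]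
    abel
  rw [e5]
  simp only [transpose_sub, transpose_mul, Matrix.mul_sub, Matrix.sub_mul, Matrix.mul_assoc]
  abel

lemma riccati_S {n m : ℕ} (B : Matrix (Fin n) (Fin m) ℝ)
    (γ : ℝ) (hγ : 0 < γ) (P : Matrix (Fin n) (Fin n) ℝ) (hP : P.PosSemidef) :
    (γ • (1 : Matrix (Fin m) (Fin m) ℝ) + Bᵀ * P * B).PosDef := by
  have h := hP.conjTranspose_mul_mul_same B
  rw [conjTranspose_eq_transpose_of_trivial] at h
  exact (Matrix.PosDef.one.smul hγ).add_posSemidef h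

lemma riccati_symm {k : ℕ} {M : Matrix (Fin k) (Fin k) ℝ} (h : M.IsHermitian) : Mᵀ = M := by
  rw [← conjTranspose_eq_transpose_of_trivial]; exact h

/-- Monotonicity of the Riccati operator
`R_γ(P) = AᵀPA − AᵀPB(γI + BᵀPB)⁻¹BᵀPA + Q` in both `γ` and `P`. -/
theorem riccati_operator_monotone (n m : ℕ)
    (A : Matrix (Fin n) (Fin n) ℝ) (B : Matrix (Fin n) (Fin m) ℝ)
    (Q : Matrix (Fin n) (Fin n) ℝ) (hQ : Q.IsSymm)
    (γ₁ γ₂ : ℝ) (hγ₁ : 0 < γ₁) (hγ : γ₁ ≤ γ₂)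
    (P₁ P₂ : Matrix (Fin n) (Fin n) ℝ)
    (hP₁ : P₁.PosSemidef) (hP₂ : P₂.PosSemidef)
    (hle : (P₂ - P₁).PosSemidef) :
    ((Aᵀ * P₂ * A -
        Aᵀ * P₂ * B * (γ₂ • (1 : Matrix (Fin m) (Fin m) ℝ) + Bᵀ * P₂ * B)⁻¹ * Bᵀ * P₂ * A + Q) -
      (Aᵀ * P₁ * A -
        Aᵀ * P₁ * B * (γ₁ • (1 : Matrix (Fin m) (Fin m) ℝ) + Bᵀ * P₁ * B)⁻¹ * Bᵀ * P₁ * A + Q)).PosSemidef := by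
  have h1 := riccati_S B γ₁ hγ₁ P₁ hP₁
  have h2 := riccati_S B γ₂ (hγ₁.trans_le hγ) P₂ hP₂
  have u1 := (Matrix.isUnit_iff_isUnit_det _).1 h1.isUnit
  have u2 := (Matrix.isUnit_iff_isUnit_det _).1 h2.isUnit
  generalize hK : (γ₂ • (1 : Matrix (Fin m) (Fin m) ℝ) + Bᵀ * P₂ * B)⁻¹ * (Bᵀ * P₂ * A) = K
  have E1 := riccati_aux A B γ₁ P₁ (riccati_symm hP₁.1) _ _ rfl (Matrix.mul_nonsing_inv _ u1)
    (Matrix.nonsing_inv_mul _ u1) (riccati_symm h1.inv.1) K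
  have E2 := riccati_aux A B γ₂ P₂ (riccati_symm hP₂.1) _ _ rfl (Matrix.mul_nonsing_inv _ u2)
    (Matrix.nonsing_inv_mul _ u2) (riccati_symm h2.inv.1) K
  rw [hK, sub_self, Matrix.mul_zero, sub_zero] at E2
  rw [E1, E2]
  have p1 := hle.conjTranspose_mul_mul_same (A - B * K)
  have p2 := (posSemidef_conjTranspose_mul_self K).smul (sub_nonneg.2 hγ)
  have p3 := h1.posSemidef.conjTranspose_mul_mul_same
    (K - (γ₁ • (1 : Matrix (Fin m) (Fin m) ℝ) + Bᵀ * P₁ * B)⁻¹ * (Bᵀ * P₁ * A))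
  have p := (p1.add p2).add p3
  simp only [conjTranspose_eq_transpose_of_trivial] at p
  rw [Matrix.mul_sub _ P₂ P₁, Matrix.sub_mul (_ * P₂), sub_smul] at p
  convert p using 1
  abel
end

section
/- Let A ∈ ℝ^{n×n}, B ∈ ℝ^{n×m}, Q ∈ ℝ^{n×n} symmetric positive semidefinite, and let 0 < γ₁ < γ₂. Define two sequences of matrices by P_{γ₁}^{(0)} = P_{γ₂}^{(0)} = 0 and, for k ≥ 0, P_{γ}^{(k+1)} = AᵀP_{γ}^{(k)}A − AᵀP_{γ}^{(k)}B(γI_m + BᵀP_{γ}^{(k)}B)⁻¹BᵀP_{γ}^{(k)}A + Q for γ ∈ {γ₁, γ₂}. Then for every k ≥ 0, each P_{γ}^{(k)} is symmetric positive semidefinite and P_{γ₁}^{(k)} ⪯ P_{γ₂}^{(k)}. -/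
open Matrix

theorem ric_S {n m : ℕ} (B : Matrix (Fin n) (Fin m) ℝ) (P : Matrix (Fin n) (Fin n) ℝ)
    (hP : P.PosSemidef) (γ : ℝ) (hγ : 0 < γ) :
    (γ • (1 : Matrix (Fin m) (Fin m) ℝ) + Bᵀ * P * B).PosDef := by
  have h1 : (γ • (1 : Matrix (Fin m) (Fin m) ℝ)).PosDef := PosDef.one.smul hγ
  have h2 := hP.conjTranspose_mul_mul_same B
  rw [conjTranspose_eq_transpose_of_trivial] at h2
  exact h1.add_posSemidef h2

theorem ric_id {n m : ℕ} (A : Matrix (Fin n) (Fin n) ℝ) (B : Matrix (Fin n) (Fin m) ℝ)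
    (P : Matrix (Fin n) (Fin n) ℝ) (hP : P.PosSemidef) (γ : ℝ) (hγ : 0 < γ)
    (K G : Matrix (Fin m) (Fin n) ℝ)
    (hG : G = (γ • (1 : Matrix (Fin m) (Fin m) ℝ) + Bᵀ * P * B)⁻¹ * (Bᵀ * P * A)) :
    Aᵀ * P * A -
      Aᵀ * P * B * (γ • (1 : Matrix (Fin m) (Fin m) ℝ) + Bᵀ * P * B)⁻¹ * Bᵀ * P * A
    = (A - B * K)ᵀ * P * (A - B * K) + γ • (Kᵀ * K)
      - (K - G)ᵀ * (γ • (1 : Matrix (Fin m) (Fin m) ℝ) + Bᵀ * P * B) * (K - G) := by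
  have hS := ric_S B P hP γ hγ
  have hPt : Pᵀ = P := by
    have := hP.isHermitian.eq
    rwa [conjTranspose_eq_transpose_of_trivial] at this
  have hSt : (γ • (1 : Matrix (Fin m) (Fin m) ℝ) + Bᵀ * P * B)ᵀ
      = γ • (1 : Matrix (Fin m) (Fin m) ℝ) + Bᵀ * P * B := by
    have := hS.isHermitian.eq
    rwa [conjTranspose_eq_transpose_of_trivial] at this
  have hSS : γ • (Kᵀ * K) = Kᵀ * (γ • (1 : Matrix (Fin m) (Fin m) ℝ) + Bᵀ * P * B) * K
      - Kᵀ * Bᵀ * P * B * K := by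
    simp [Matrix.mul_add, Matrix.add_mul, Matrix.mul_assoc]
  have hu := (Matrix.isUnit_iff_isUnit_det _).1 hS.isUnit
  generalize γ • (1 : Matrix (Fin m) (Fin m) ℝ) + Bᵀ * P * B = S at *
  have h1 : S * G = Bᵀ * P * A := by
    rw [hG, Matrix.mul_nonsing_inv_cancel_left _ _ hu]
  have h2 : Gᵀ * S = Aᵀ * P * B := by
    have := congrArg transpose h1
    simpa [transpose_mul, hSt, hPt, Matrix.mul_assoc] using this
  have h3 : Aᵀ * P * B * S⁻¹ * Bᵀ * P * A = Aᵀ * P * B * G := by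
    rw [hG]; simp only [Matrix.mul_assoc]
  rw [h3, hSS]
  have h4 : (K - G)ᵀ * S * (K - G) = Kᵀ * S * K - Kᵀ * (Bᵀ * P * A) - Aᵀ * P * B * K
      + Aᵀ * P * B * G := by
    rw [← h1, ← h2, transpose_sub]
    simp only [Matrix.mul_sub, Matrix.sub_mul, Matrix.mul_assoc]
    abel
  rw [h4, transpose_sub, transpose_mul]
  simp only [Matrix.mul_sub, Matrix.sub_mul, Matrix.mul_assoc]
  abel



/-- Monotone comparison of two Riccati iterations (Theorem 7, Step 1): starting
from `0`, the iterates for `γ₁ < γ₂` are PSD and ordered `P_{γ₁}^{(k)} ⪯ P_{γ₂}^{(k)}`. -/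
theorem riccati_iterates_monotone_in_gamma (n m : ℕ)
    (A : Matrix (Fin n) (Fin n) ℝ) (B : Matrix (Fin n) (Fin m) ℝ)
    (Q : Matrix (Fin n) (Fin n) ℝ) (hQ : Q.PosSemidef)
    (γ₁ γ₂ : ℝ) (hγ₁ : 0 < γ₁) (hγ : γ₁ < γ₂)
    (P1 P2 : ℕ → Matrix (Fin n) (Fin n) ℝ)
    (hP10 : P1 0 = 0) (hP20 : P2 0 = 0)
    (hP1 : ∀ k, P1 (k + 1) = Aᵀ * P1 k * A -
      Aᵀ * P1 k * B * (γ₁ • (1 : Matrix (Fin m) (Fin m) ℝ) + Bᵀ * P1 k * B)⁻¹ * Bᵀ * P1 k * A + Q)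
    (hP2 : ∀ k, P2 (k + 1) = Aᵀ * P2 k * A -
      Aᵀ * P2 k * B * (γ₂ • (1 : Matrix (Fin m) (Fin m) ℝ) + Bᵀ * P2 k * B)⁻¹ * Bᵀ * P2 k * A + Q) :
    ∀ k, (P1 k).PosSemidef ∧ (P2 k).PosSemidef ∧ (P2 k - P1 k).PosSemidef := by
  have key : ∀ (γ : ℝ) (P : Matrix (Fin n) (Fin n) ℝ), 0 < γ → P.PosSemidef →
      (Aᵀ * P * A - Aᵀ * P * B * (γ • (1 : Matrix (Fin m) (Fin m) ℝ) + Bᵀ * P * B)⁻¹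
        * Bᵀ * P * A + Q).PosSemidef := by
    intro γ P hγ hP
    rw [ric_id A B P hP γ hγ _ _ rfl, sub_self, Matrix.mul_zero, sub_zero]
    refine PosSemidef.add (PosSemidef.add ?_ ?_) hQ
    · exact hP.conjTranspose_mul_mul_same _
    · exact (posSemidef_conjTranspose_mul_self _).smul hγ.le
  have hγ₂ := hγ₁.trans hγ
  intro k
  induction k with
  | zero => rw [hP10, hP20]; simp [PosSemidef.zero]
  | succ k ih =>
    obtain ⟨h1, h2, h3⟩ := ih
    refine ⟨hP1 k ▸ key _ _ hγ₁ h1, hP2 k ▸ key _ _ hγ₂ h2, ?_⟩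
    rw [hP1, hP2]
    obtain ⟨G2, hG2⟩ : ∃ G, G = (γ₂ • (1 : Matrix (Fin m) (Fin m) ℝ) + Bᵀ * P2 k * B)⁻¹
      * (Bᵀ * P2 k * A) := ⟨_, rfl⟩
    obtain ⟨G1, hG1⟩ : ∃ G, G = (γ₁ • (1 : Matrix (Fin m) (Fin m) ℝ) + Bᵀ * P1 k * B)⁻¹
      * (Bᵀ * P1 k * A) := ⟨_, rfl⟩
    rw [ric_id A B _ h2 γ₂ hγ₂ G2 G2 hG2, ric_id A B _ h1 γ₁ hγ₁ G2 G1 hG1]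
    have e1 := h3.conjTranspose_mul_mul_same (A - B * G2)
    have e2 := (posSemidef_conjTranspose_mul_self G2).smul (sub_nonneg.2 hγ.le)
    have e3 := (ric_S B _ h1 γ₁ hγ₁).posSemidef.conjTranspose_mul_mul_same (G2 - G1)
    rw [conjTranspose_eq_transpose_of_trivial] at e1 e2 e3
    convert (e1.add e2).add e3 using 1
    rw [sub_self, Matrix.mul_zero, sub_zero, Matrix.mul_sub _ (P2 k) (P1 k), Matrix.sub_mul _ _ (A - B * G2),
      sub_smul]
    abel
end

section
/- Let A ∈ ℝ^{n×n}, B ∈ ℝ^{n×m}, Q ∈ ℝ^{n×n} symmetric, γ > 0, μ ≥ 1, and let P ∈ ℝ^{n×n} be a symmetric positive semidefinite matrix satisfying P = Q + μ²AᵀPA − μ⁴AᵀPB(γI_m + μ²BᵀPB)⁻¹BᵀPA. Define H₁₂ = μ²AᵀPB, H₂₂ = γI_m + μ²BᵀPB, and K = H₂₂⁻¹H₁₂ᵀ. Let c ∈ ℝ, λ ∈ ℂ, β ∈ ℝ, and suppose that: (i) the block matrix [[ Q + c²γ|λ|²·H₁₂H₂₂⁻²H₁₂ᵀ, βH₁₂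 ],[ βH₁₂ᵀ, H₂₂ ]] is positive semidefinite, and (ii) 1 − 2c·Re λ + c²|λ|² ≤ β². Then, with M = μ·A − μcλ·BK (a complex n×n matrix), the Hermitian matrix P − Mᴴ P M is positive semidefinite (all real matrices regarded as complex matrices entrywise). -/
open Matrix ComplexOrder

theorem aux_map_posSemidef {n : ℕ} {R : Matrix (Fin n) (Fin n) ℝ} (h : R.PosSemidef) :
    (R.map (Complex.ofReal ·)).PosSemidef := by
  obtain ⟨L, rfl⟩ := by
    open scoped MatrixOrder in
    exact CStarAlgebra.nonneg_iff_eq_star_mul_self.mp h.nonneg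
  have : (star L * L).map (Complex.ofReal ·) =
      (L.map (Complex.ofReal ·))ᴴ * (L.map (Complex.ofReal ·)) := by
    ext i j
    simp [Matrix.mul_apply]
  rw [this]
  exact Matrix.posSemidef_conjTranspose_mul_self _

theorem aux_expand {n : ℕ} (U V P : Matrix (Fin n) (Fin n) ℝ) (z w : ℂ) :
    (z • U.map (Complex.ofReal ·) - w • V.map (Complex.ofReal ·))ᴴ * P.map (Complex.ofReal ·) *
      (z • U.map (Complex.ofReal ·) - w • V.map (Complex.ofReal ·)) =
    (star z * z) • (Uᵀ * P * U).map (Complex.ofReal ·)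
    - (star z * w) • (Uᵀ * P * V).map (Complex.ofReal ·)
    - (star w * z) • (Vᵀ * P * U).map (Complex.ofReal ·)
    + (star w * w) • (Vᵀ * P * V).map (Complex.ofReal ·) := by
  have hm : ∀ X Y : Matrix (Fin n) (Fin n) ℝ, (X * Y).map (Complex.ofReal ·) =
      X.map (Complex.ofReal ·) * Y.map (Complex.ofReal ·) := by
    intro X Y
    ext i j
    simp [Matrix.mul_apply]
  have hc : ∀ X : Matrix (Fin n) (Fin n) ℝ, (X.map (Complex.ofReal ·))ᴴ =
      Xᵀ.map (Complex.ofReal ·) := by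
    intro X
    ext i j
    simp
  simp only [hm, conjTranspose_sub, conjTranspose_smul, hc, sub_mul, mul_sub, smul_mul_assoc,
    mul_smul_comm, smul_sub, smul_smul]
  ext i j
  simp only [Matrix.sub_apply, Matrix.add_apply, Matrix.smul_apply, smul_eq_mul]
  ring

/-- Theorem 5, exact (non-convex) feasibility condition: if the block LMI
`𝒮_q(β,c,λ,H) ⪰ 0` holds and `1 − 2c·Re λ + c²|λ|² ≤ β²`, then
`P − MᴴPM ⪰ 0` with `M = μA − μcλ·BK`. -/
theorem quadratic_lmi_implies_lyapunov (n m : ℕ)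
    (A : Matrix (Fin n) (Fin n) ℝ) (B : Matrix (Fin n) (Fin m) ℝ)
    (Q : Matrix (Fin n) (Fin n) ℝ) (hQ : Q.IsSymm)
    (γ μ : ℝ) (hγ : 0 < γ) (hμ : 1 ≤ μ)
    (P : Matrix (Fin n) (Fin n) ℝ) (hP : P.PosSemidef)
    (hric : P = Q + μ ^ 2 • (Aᵀ * P * A) -
      μ ^ 4 • (Aᵀ * P * B *
        (γ • (1 : Matrix (Fin m) (Fin m) ℝ) + μ ^ 2 • (Bᵀ * P * B))⁻¹ * (Bᵀ * P * A)))
    (H₁₂ : Matrix (Fin n) (Fin m) ℝ) (hH₁₂ : H₁₂ = μ ^ 2 • (Aᵀ * P * B))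
    (H₂₂ : Matrix (Fin m) (Fin m) ℝ)
    (hH₂₂ : H₂₂ = γ • (1 : Matrix (Fin m) (Fin m) ℝ) + μ ^ 2 • (Bᵀ * P * B))
    (K : Matrix (Fin m) (Fin n) ℝ) (hK : K = H₂₂⁻¹ * H₁₂ᵀ)
    (c : ℝ) (lam : ℂ) (β : ℝ)
    (hSq : (Matrix.fromBlocks
        (Q + (c ^ 2 * γ * ‖lam‖ ^ 2) • (H₁₂ * (H₂₂⁻¹) ^ 2 * H₁₂ᵀ))
        (β • H₁₂) (β • H₁₂ᵀ) H₂₂).PosSemidef)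
    (hβ : 1 - 2 * c * lam.re + c ^ 2 * ‖lam‖ ^ 2 ≤ β ^ 2) :
    ((P.map (Complex.ofReal ·)) -
      ((μ : ℂ) • A.map (Complex.ofReal ·) -
        ((μ : ℂ) * (c : ℂ) * lam) •
          (B.map (Complex.ofReal ·) * K.map (Complex.ofReal ·)))ᴴ *
        (P.map (Complex.ofReal ·)) *
      ((μ : ℂ) • A.map (Complex.ofReal ·) -
        ((μ : ℂ) * (c : ℂ) * lam) •
          (B.map (Complex.ofReal ·) * K.map (Complex.ofReal ·)))).PosSemidef := by
  have hPt : Pᵀ = P := by simpa using hP.isHermitian.eq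
  have hBPB : (Bᵀ * P * B).PosSemidef := by
    simpa using hP.conjTranspose_mul_mul_same B
  have hD : H₂₂.PosDef := by
    rw [hH₂₂]
    exact (Matrix.PosDef.one.smul hγ).add_posSemidef (hBPB.smul (by positivity))
  have hu : IsUnit H₂₂.det := hD.det_pos.ne'.isUnit
  have hDt : H₂₂ᵀ = H₂₂ := by simpa using hD.isHermitian.eq
  have hDit : (H₂₂⁻¹)ᵀ = H₂₂⁻¹ := by rw [transpose_nonsing_inv, hDt]
  have hKt : Kᵀ = H₁₂ * H₂₂⁻¹ := by rw [hK, transpose_mul, transpose_transpose, hDit]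
  have hH₁₂t : H₁₂ᵀ = μ ^ 2 • (Bᵀ * P * A) := by
    rw [hH₁₂]; simp [hPt, Matrix.mul_assoc]
  obtain ⟨S, hS⟩ : ∃ S, S = H₁₂ * H₂₂⁻¹ * H₁₂ᵀ := ⟨_, rfl⟩
  have hSpsd : S.PosSemidef := by
    have := hD.inv.posSemidef.mul_mul_conjTranspose_same H₁₂
    rw [hS]; simpa using this
  have E1 : μ ^ 2 • (Aᵀ * P * A) = P - Q + S := by
    have : S = μ ^ 4 • (Aᵀ * P * B * H₂₂⁻¹ * (Bᵀ * P * A)) := by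
      rw [hS, hH₁₂t, hH₁₂]
      simp only [Matrix.smul_mul, Matrix.mul_smul, smul_smul]
      congr 1; ring
    rw [← hH₂₂, ← this] at hric
    nth_rewrite 2 [hric]
    abel
  have E2 : μ ^ 2 • (Aᵀ * P * (B * K)) = S := by
    rw [hS, hK]
    nth_rewrite 2 [hH₁₂]
    simp only [Matrix.smul_mul, Matrix.mul_assoc]
  have E3 : μ ^ 2 • ((B * K)ᵀ * P * A) = S := by
    have h1 : (B * K)ᵀ * P * A = Kᵀ * (Bᵀ * P * A) := by
      simp only [transpose_mul, Matrix.mul_assoc]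
    rw [h1, ← Matrix.mul_smul, ← hH₁₂t, hKt, hS]
  have E4 : μ ^ 2 • ((B * K)ᵀ * P * (B * K)) = S - γ • (Kᵀ * K) := by
    have h1 : (B * K)ᵀ * P * (B * K) = Kᵀ * (Bᵀ * P * B) * K := by
      simp only [transpose_mul, Matrix.mul_assoc]
    have h2 : μ ^ 2 • (Bᵀ * P * B) = H₂₂ - γ • 1 := by rw [hH₂₂]; abel
    rw [h1, ← Matrix.smul_mul, ← Matrix.mul_smul, h2]
    have h3 : Kᵀ * H₂₂ * K = S := by
      rw [hKt, Matrix.mul_assoc H₁₂, nonsing_inv_mul _ hu, hK, hS, Matrix.mul_one, Matrix.mul_assoc]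
    rw [Matrix.mul_sub, Matrix.sub_mul, h3]
    simp
  have hKK : H₁₂ * (H₂₂⁻¹) ^ 2 * H₁₂ᵀ = Kᵀ * K := by
    rw [hKt, hK, pow_two]; simp only [Matrix.mul_assoc]
  rw [hKK] at hSq
  have hschur : (Q + (c ^ 2 * γ * ‖lam‖ ^ 2) • (Kᵀ * K) - β ^ 2 • S).PosSemidef := by
    haveI := hD.isUnit.invertible
    have h := (Matrix.PosDef.fromBlocks₂₂ (Q + (c ^ 2 * γ * ‖lam‖ ^ 2) • (Kᵀ * K)) (β • H₁₂) hD).mp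
      (by simpa using hSq)
    have e : β • H₁₂ * H₂₂⁻¹ * (β • H₁₂)ᴴ = β ^ 2 • S := by
      rw [hS]
      simp [smul_smul, pow_two]
    rwa [e] at h
  have hR : (Q + (c ^ 2 * γ * ‖lam‖ ^ 2) • (Kᵀ * K) -
      (1 - 2 * c * lam.re + c ^ 2 * ‖lam‖ ^ 2) • S).PosSemidef := by
    convert hschur.add (hSpsd.smul (sub_nonneg.mpr hβ)) using 1
    rw [sub_smul (β ^ 2)]
    abel
  have hBK : B.map (Complex.ofReal ·) * K.map (Complex.ofReal ·) =
      (B * K).map (Complex.ofReal ·) := by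
    ext i j
    simp [Matrix.mul_apply]
  rw [hBK, aux_expand]
  convert aux_map_posSemidef hR using 1
  ext i j
  have e1 := congrArg (Complex.ofReal) (congrFun (congrFun E1 i) j)
  have e2 := congrArg (Complex.ofReal) (congrFun (congrFun E2 i) j)
  have e3 := congrArg (Complex.ofReal) (congrFun (congrFun E3 i) j)
  have e4 := congrArg (Complex.ofReal) (congrFun (congrFun E4 i) j)
  simp only [Matrix.sub_apply, Matrix.add_apply, Matrix.smul_apply, smul_eq_mul, Matrix.map_apply,
    Complex.ofReal_sub, Complex.ofReal_add, Complex.ofReal_mul, Complex.ofReal_pow,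
    Complex.ofReal_one, Complex.ofReal_ofNat, star_mul', Complex.star_def,
    Complex.conj_ofReal] at e1 e2 e3 e4 ⊢
  have n1 : (starRingEnd ℂ) lam * lam = (‖lam‖ : ℂ) ^ 2 := Complex.conj_mul' lam
  have n2 : lam + (starRingEnd ℂ) lam = 2 * (lam.re : ℂ) := by
    rw [Complex.add_conj]; push_cast; ring
  rw [← n1]
  linear_combination -e1 + (c * lam) * e2 + (c * (starRingEnd ℂ) lam) * e3 -
    (c ^ 2 * ((starRingEnd ℂ) lam * lam)) * e4 + (c * (S i j : ℂ)) * n2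
end
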